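/- arXiv:2109.13215 — 3 statements merged into one kernel-verified Lean document; each statement's English description precedes it below -/
import Mathlib

section
/- Let f̂(x) = a/√2 + b·∑_{j=1}^{N_A} cos(jnπx) with a, b > 0 and 2a > √2·b. Then the classification 0-1 risk of f̂ against the constant +1 ground truth satisfies C(f̂) ≤ √2·b·h(B,n) / (π·h(B,n)·(2a − √2·b)) + n/(2·h(B,n)). -/
open MeasureTheory

/-- `h(B,n) = (B - 1 + n) / 2`. -/
noncomputable def hBn (n B : ℕ) : ℝ := ((B : ℝ) - 1 + (n : ℝ)) / 2

/-- The learned function `f̂(x) = a/√2 + b ∑_{j=1}^{N_A} cos (j n π x)`,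
with `N_A = (B - 1)/(2n)`. -/
noncomputable def fhatS (n B : ℕ) (a b : ℝ) (x : ℝ) : ℝ :=
  a / Real.sqrt 2 +
    b * ∑ j ∈ Finset.Icc 1 ((B - 1) / (2 * n)),
      Real.cos ((j : ℝ) * (n : ℝ) * Real.pi * x)

/-- The classification 0-1 risk of `f` against the constant `+1` ground truth:
`C(f) = (1/2) · Leb {x ∈ [-1,1] : f(x) ≤ 0}` (test points uniform on `[-1,1]`). -/
noncomputable def classRisk (f : ℝ → ℝ) : ℝ :=
  (volume {x ∈ Set.Icc (-1 : ℝ) 1 | f x ≤ 0}).toReal / 2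


noncomputable def Faux (N : ℕ) (a b : ℝ) (p : ℝ) : ℝ :=
  a / Real.sqrt 2 + b * ∑ j ∈ Finset.Icc 1 N, Real.cos ((j : ℝ) * (2 * p))

noncomputable def gaux (N : ℕ) (a b : ℝ) (p : ℝ) : ℝ :=
  Set.indicator {p | Faux N a b p ≤ 0} (fun _ => (1 : ℝ)) p

noncomputable def Gaux (β : ℝ) (p : ℝ) : ℝ :=
  Set.indicator {p | β * p ≤ - Real.sin p} (fun _ => (1 : ℝ)) p

lemma dirichlet_aux (N : ℕ) (p : ℝ) :
    2 * Real.sin p * ∑ j ∈ Finset.Icc 1 N, Real.cos ((j : ℝ) * (2 * p)) =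
      Real.sin ((2 * N + 1) * p) - Real.sin p := by
  induction N with
  | zero => simp
  | succ k ih =>
    rw [Finset.sum_Icc_succ_top (by omega), mul_add, ih]
    have h1 : (2 * ((k + 1 : ℕ) : ℝ) + 1) * p = ((k + 1 : ℕ) : ℝ) * (2 * p) + p := by ring
    have h2 : (2 * (k : ℝ) + 1) * p = ((k + 1 : ℕ) : ℝ) * (2 * p) - p := by push_cast; ring
    rw [h1, h2, Real.sin_add, Real.sin_sub]
    ring

lemma Faux_cont (N : ℕ) (a b : ℝ) : Continuous (Faux N a b) := by
  unfold Faux; fun_prop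

lemma Faux_set_meas (N : ℕ) (a b : ℝ) : MeasurableSet {p | Faux N a b p ≤ 0} :=
  (isClosed_le (Faux_cont N a b) continuous_const).measurableSet

lemma ind_intble {s : Set ℝ} (hs : MeasurableSet s) (u v : ℝ) :
    IntervalIntegrable (fun p => s.indicator (fun _ => (1 : ℝ)) p) volume u v := by
  have h : IntervalIntegrable (fun _ : ℝ => (1 : ℝ)) volume u v := intervalIntegrable_const
  exact ⟨h.1.indicator hs, h.2.indicator hs⟩

lemma gaux_int (N : ℕ) (a b u v : ℝ) : IntervalIntegrable (gaux N a b) volume u v :=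
  ind_intble (Faux_set_meas N a b) u v

lemma Gaux_int (β u v : ℝ) : IntervalIntegrable (Gaux β) volume u v :=
  ind_intble (isClosed_le (by fun_prop) (by fun_prop)).measurableSet u v

lemma Gaux_nonneg (β p : ℝ) : 0 ≤ Gaux β p :=
  Set.indicator_nonneg (fun _ _ => zero_le_one) _

lemma Faux_periodic (N : ℕ) (a b : ℝ) : Function.Periodic (Faux N a b) Real.pi := by
  intro p
  unfold Faux
  congr 2
  refine Finset.sum_congr rfl fun j _ => ?_
  rw [← Real.cos_add_nat_mul_two_pi ((j : ℝ) * (2 * p)) j]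
  congr 1; ring

lemma gaux_periodic (N : ℕ) (a b : ℝ) : Function.Periodic (gaux N a b) Real.pi := by
  intro p
  simp only [gaux, Set.indicator, Set.mem_ofPred_eq, Faux_periodic N a b p]

lemma Faux_neg (N : ℕ) (a b p : ℝ) : Faux N a b (-p) = Faux N a b p := by
  unfold Faux
  congr 2
  refine Finset.sum_congr rfl fun j _ => ?_
  rw [← Real.cos_neg]
  congr 1; ring

lemma gaux_neg (N : ℕ) (a b p : ℝ) : gaux N a b (-p) = gaux N a b p := by
  simp only [gaux, Set.indicator, Set.mem_ofPred_eq, Faux_neg]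

lemma gaux_half (N : ℕ) (a b : ℝ) :
    ∫ p in (-(Real.pi/2))..(Real.pi/2), gaux N a b p = 2 * ∫ p in (0:ℝ)..(Real.pi/2), gaux N a b p := by
  rw [← intervalIntegral.integral_add_adjacent_intervals (gaux_int N a b _ 0) (gaux_int N a b 0 _)]
  have := intervalIntegral.integral_comp_neg (a := 0) (b := Real.pi/2) (gaux N a b)
  simp only [gaux_neg, neg_zero] at this
  rw [← this]; ring

lemma gaux_full (n N : ℕ) (hn : 0 < n) (a b : ℝ) :
    ∫ x in (-1:ℝ)..1, gaux N a b ((n * Real.pi / 2) * x) =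
      4 / Real.pi * ∫ p in (0:ℝ)..(Real.pi/2), gaux N a b p := by
  have hn' : (n : ℝ) ≠ 0 := by positivity
  have hpi := Real.pi_ne_zero
  rw [intervalIntegral.integral_comp_mul_left _ (by positivity)]
  have h := (gaux_periodic N a b).intervalIntegral_add_zsmul_eq n (n * Real.pi / 2 * -1)
    (fun u v => gaux_int N a b u v)
  have h2 := (gaux_periodic N a b).intervalIntegral_add_eq (n * Real.pi / 2 * -1) (-(Real.pi/2))
  have e1 : (n * Real.pi / 2 * -1) + (n : ℤ) • Real.pi = n * Real.pi / 2 * 1 := by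
    simp; ring
  have e2 : -(Real.pi/2) + Real.pi = Real.pi/2 := by ring
  rw [e1, h2, e2, gaux_half] at h
  rw [h]
  simp
  field_simp
  ring

lemma count_aux (K : ℕ) (y : ℝ) (hy : 0 ≤ y) :
    ∑ k ∈ Finset.range K, (if (2 * (k : ℝ) + 1) ≤ y then (1 : ℝ) else 0) ≤ (y + 1) / 2 := by
  rw [Finset.sum_ite, Finset.sum_const_zero, add_zero, Finset.sum_const, nsmul_eq_mul, mul_one]
  have hsub : (Finset.range K).filter (fun k : ℕ => (2 * (k : ℝ) + 1) ≤ y) ⊆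
      Finset.range ⌊(y + 1) / 2⌋₊ := by
    intro k hk
    rw [Finset.mem_filter] at hk
    rw [Finset.mem_range, ← Nat.succ_le_iff]
    apply Nat.le_floor
    push_cast
    linarith [hk.2]
  have h1 := Finset.card_le_card hsub
  rw [Finset.card_range] at h1
  calc _ ≤ ((⌊(y + 1) / 2⌋₊ : ℕ) : ℝ) := by exact_mod_cast h1
    _ ≤ _ := Nat.floor_le (by positivity)

lemma Gaux_piece (β : ℝ) (hβ : 0 < β) (k : ℕ) :
    ∫ p in (2 * Real.pi * k)..(2 * Real.pi * (k + 1 : ℕ)), Gaux β p ≤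
      ∫ t in (0:ℝ)..Real.pi, Gaux β (t + (2 * k + 1) * Real.pi) := by
  have hpi := Real.pi_pos
  rw [← intervalIntegral.integral_add_adjacent_intervals
    (Gaux_int β _ ((2 * k + 1) * Real.pi)) (Gaux_int β _ _)]
  rw [intervalIntegral.integral_comp_add_right]
  have h0 : ∫ p in (2 * Real.pi * k)..((2 * k + 1) * Real.pi), Gaux β p = 0 := by
    apply intervalIntegral.integral_zero_ae
    refine Filter.Eventually.of_forall fun p hp => ?_
    rw [Set.uIoc_of_le (by nlinarith)] at hp
    have hs : 0 ≤ Real.sin p := by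
      have := Real.sin_nonneg_of_nonneg_of_le_pi (x := p - k * (2 * Real.pi))
        (by linarith [hp.1]) (by linarith [hp.2])
      rwa [Real.sin_sub_nat_mul_two_pi] at this
    have hp0 : 0 < p := lt_of_le_of_lt (by positivity) hp.1
    apply Set.indicator_of_notMem
    simp only [Set.mem_ofPred_eq, not_le]
    have := mul_pos hβ hp0
    linarith
  rw [h0, zero_add]
  apply le_of_eq
  congr 1
  · ring
  · push_cast; ring

lemma Gaux_total (β : ℝ) (hβ : 0 < β) (K : ℕ) :
    ∫ p in (0:ℝ)..(2 * Real.pi * K), Gaux β p ≤ 1 / (Real.pi * β) + Real.pi / 2 := by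
  have hpi := Real.pi_pos
  have h := intervalIntegral.sum_integral_adjacent_intervals (f := Gaux β) (μ := volume)
    (a := fun k : ℕ => 2 * Real.pi * k) (n := K) (fun k _ => Gaux_int β _ _)
  simp only [Nat.cast_zero, mul_zero] at h
  rw [← h]
  have hint : ∀ k : ℕ, IntervalIntegrable
      (fun t => Gaux β (t + (2 * k + 1) * Real.pi)) volume 0 Real.pi := fun k => by
    have := (Gaux_int β (0 + (2 * k + 1) * Real.pi) (Real.pi + (2 * k + 1) * Real.pi)).comp_add_right
      ((2 * k + 1) * Real.pi)
    simpa using this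
  calc _ ≤ ∑ k ∈ Finset.range K, ∫ t in (0:ℝ)..Real.pi, Gaux β (t + (2 * k + 1) * Real.pi) :=
        Finset.sum_le_sum fun k _ => Gaux_piece β hβ k
    _ = ∫ t in (0:ℝ)..Real.pi, ∑ k ∈ Finset.range K, Gaux β (t + (2 * k + 1) * Real.pi) :=
        (intervalIntegral.integral_finsetSum fun k _ => hint k).symm
    _ ≤ ∫ t in (0:ℝ)..Real.pi, (Real.sin t * (1 / (2 * (β * Real.pi))) + 1 / 2) := by
        apply intervalIntegral.integral_mono_on hpi.le
        · have hsum := IntervalIntegrable.sum (Finset.range K) (fun k _ => hint k)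
          have hfe : (∑ k ∈ Finset.range K, fun t => Gaux β (t + (2 * (k : ℝ) + 1) * Real.pi)) =
              fun t => ∑ k ∈ Finset.range K, Gaux β (t + (2 * (k : ℝ) + 1) * Real.pi) := by
            funext t; simp
          rwa [hfe] at hsum
        · exact Continuous.intervalIntegrable (by fun_prop) _ _
        · intro t ht
          have hs := Real.sin_nonneg_of_nonneg_of_le_pi ht.1 ht.2
          refine le_trans (Finset.sum_le_sum fun k _ => ?_)
            (le_trans (count_aux K (Real.sin t / (β * Real.pi)) (by positivity)) (le_of_eq ?_))
          · unfold Gaux Set.indicator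
            have e : Real.sin (t + (2 * k + 1) * Real.pi) = - Real.sin t := by
              have : t + (2 * k + 1) * Real.pi = (t + Real.pi) + k * (2 * Real.pi) := by ring
              rw [this, Real.sin_add_nat_mul_two_pi, Real.sin_add_pi]
            simp only [Set.mem_ofPred_eq, e, neg_neg]
            by_cases hc : β * (t + (2 * k + 1) * Real.pi) ≤ Real.sin t
            · rw [if_pos hc, if_pos]
              rw [le_div_iff₀ (by positivity)]
              have := mul_nonneg hβ.le ht.1
              linarith
            · rw [if_neg hc]
              split_ifs <;> norm_num
          · field_simp
    _ = _ := by
        rw [intervalIntegral.integral_add (Continuous.intervalIntegrable (by fun_prop) _ _)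
          (Continuous.intervalIntegrable (by fun_prop) _ _), intervalIntegral.integral_mul_const,
          integral_sin, intervalIntegral.integral_const]
        simp
        field_simp
        ring

lemma gaux_bound (N : ℕ) (a b : ℝ) (hb : 0 < b) (hab : b < Real.sqrt 2 * a) :
    ∫ p in (0:ℝ)..(Real.pi/2), gaux N a b p ≤
      b / (2 * (Real.sqrt 2 * a - b)) + Real.pi / (2 * (2 * N + 1)) := by
  have hpi := Real.pi_pos
  set c : ℝ := (Real.sqrt 2 * a - b) / b with hc
  have hc0 : 0 < c := div_pos (by linarith) hb
  have hM : (0:ℝ) < 2 * N + 1 := by positivity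
  set M : ℝ := 2 * N + 1 with hMd
  set β : ℝ := 2 * c / (Real.pi * M) with hβ
  have hβ0 : 0 < β := by positivity
  have key : ∫ p in (0:ℝ)..(Real.pi/2), gaux N a b p ≤
      ∫ p in (0:ℝ)..(Real.pi/2), Gaux β (M * p) := by
    apply intervalIntegral.integral_mono_on_of_le_Ioo (by positivity) (gaux_int N a b _ _)
    · exact ind_intble (s := {p | β * (M * p) ≤ - Real.sin (M * p)})
        (isClosed_le (by fun_prop) (by fun_prop)).measurableSet _ _
    · intro p hp
      by_cases hF : Faux N a b p ≤ 0
      · have hsp : 0 < Real.sin p := Real.sin_pos_of_pos_of_lt_pi hp.1 (by linarith [hp.2])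
        have hj := Real.mul_le_sin hp.1.le hp.2.le
        have hd := dirichlet_aux N p
        have hmem : β * (M * p) ≤ - Real.sin (M * p) := by
          unfold Faux at hF
          set S := ∑ j ∈ Finset.Icc 1 N, Real.cos ((j : ℝ) * (2 * p))
          have h1 : (a / Real.sqrt 2 + b * S) * (2 * Real.sin p) ≤ 0 :=
            mul_nonpos_of_nonpos_of_nonneg hF (by linarith)
          have h2 : a / Real.sqrt 2 * 2 = Real.sqrt 2 * a := by
            have : Real.sqrt 2 * Real.sqrt 2 = 2 := Real.mul_self_sqrt (by norm_num)
            field_simp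
            rw [pow_two, this]
          have h3 : (Real.sqrt 2 * a - b) * Real.sin p ≤ b * (-Real.sin (M * p)) := by
            have : (a / Real.sqrt 2 + b * S) * (2 * Real.sin p) =
              (a / Real.sqrt 2 * 2) * Real.sin p + b * (2 * Real.sin p * S) := by ring
            rw [this, h2, hd] at h1
            linarith
          have h4 : c * Real.sin p ≤ -Real.sin (M * p) := by
            rw [hc, div_mul_eq_mul_div, div_le_iff₀ hb]; linarith
          have h5 : β * (M * p) = c * (2 / Real.pi * p) := by
            rw [hβ]; field_simp
          rw [h5]
          exact (mul_le_mul_of_nonneg_left hj hc0.le).trans h4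
        have : Gaux β (M * p) = 1 := Set.indicator_of_mem (s := {p | β * p ≤ - Real.sin p}) hmem _
        rw [this]
        exact Set.indicator_le_self' (fun _ _ => zero_le_one) p
      · have : gaux N a b p = 0 := Set.indicator_of_notMem (s := {p | Faux N a b p ≤ 0}) hF _
        rw [this]; exact Gaux_nonneg _ _
  refine key.trans ?_
  rw [intervalIntegral.integral_comp_mul_left _ hM.ne', mul_zero, smul_eq_mul]
  have hle : ∫ p in (0:ℝ)..(M * (Real.pi/2)), Gaux β p ≤
      ∫ p in (0:ℝ)..(2 * Real.pi * (2 * N + 1 : ℕ)), Gaux β p := by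
    apply intervalIntegral.integral_mono_interval le_rfl (by positivity)
    · push_cast; rw [← hMd]; nlinarith
    · exact Filter.Eventually.of_forall fun p => Gaux_nonneg _ _
    · exact Gaux_int _ _ _
  have htot := hle.trans (Gaux_total β hβ0 (2 * N + 1))
  refine (mul_le_mul_of_nonneg_left htot (by positivity)).trans (le_of_eq ?_)
  have hd : Real.sqrt 2 * a - b ≠ 0 := by linarith
  have e : b / (2 * (Real.sqrt 2 * a - b)) = 1 / (2 * c) := by
    rw [hc]; field_simp
  rw [e, hβ]
  field_simp

/-- **Upper bound on the classification risk.**  For `f̂(x) = a/√2 + b ∑_{j=1}^{N_A} cos (j n π x)`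
with `a, b > 0` and `2a > √2 b`, the classification risk against the constant `+1` ground
truth satisfies `C(f̂) ≤ √2 b h(B,n) / (π h(B,n) (2a - √2 b)) + n / (2 h(B,n))`. -/
theorem stmt_3 (n B : ℕ) (hn : 0 < n) (hB : 1 < B) (hdvd : 2 * n ∣ B - 1)
    (a b : ℝ) (ha : 0 < a) (hb : 0 < b) (hab : Real.sqrt 2 * b < 2 * a) :
    classRisk (fhatS n B a b) ≤
      Real.sqrt 2 * b * hBn n B / (Real.pi * hBn n B * (2 * a - Real.sqrt 2 * b)) +
        (n : ℝ) / (2 * hBn n B) := by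
  obtain ⟨N, hN⟩ := hdvd
  have hpi := Real.pi_pos
  have hn' : (0:ℝ) < n := by exact_mod_cast hn
  have hdiv : (B - 1) / (2 * n) = N := by
    rw [hN]; exact Nat.mul_div_cancel_left _ (by omega)
  have hBr : (B : ℝ) = 2 * n * N + 1 := by
    have : B = 2 * n * N + 1 := by omega
    exact_mod_cast this
  have hs2 : Real.sqrt 2 * Real.sqrt 2 = 2 := Real.mul_self_sqrt (by norm_num)
  have hs0 : 0 < Real.sqrt 2 := by positivity
  have hab' : b < Real.sqrt 2 * a := by nlinarith
  have hf : ∀ x, fhatS n B a b x = Faux N a b ((n * Real.pi / 2) * x) := by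
    intro x
    unfold fhatS Faux
    rw [hdiv]
    congr 2
    refine Finset.sum_congr rfl fun j _ => ?_
    congr 1; ring
  have hC : classRisk (fhatS n B a b) =
      (∫ x in (-1:ℝ)..1, gaux N a b ((n * Real.pi / 2) * x)) / 2 := by
    unfold classRisk
    congr 1
    have hms : MeasurableSet {x | fhatS n B a b x ≤ 0} := by
      simp only [hf]
      exact (isClosed_le ((Faux_cont N a b).comp (by fun_prop)) continuous_const).measurableSet
    rw [intervalIntegral.integral_of_le (by norm_num), ← integral_Icc_eq_integral_Ioc]
    have : (fun x => gaux N a b ((n * Real.pi / 2) * x)) =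
        Set.indicator {x | fhatS n B a b x ≤ 0} (fun _ => (1:ℝ)) := by
      funext x
      simp only [gaux, Set.indicator, Set.mem_ofPred_eq, hf]
    rw [this, setIntegral_indicator hms]
    simp [Measure.real]
    rfl
  rw [hC, gaux_full n N hn]
  have hb1 := gaux_bound N a b hb hab'
  have hh : hBn n B = n * (2 * N + 1) / 2 := by unfold hBn; rw [hBr]; ring
  have hhpos : 0 < hBn n B := by rw [hh]; positivity
  have e1 : Real.sqrt 2 * b * hBn n B / (Real.pi * hBn n B * (2 * a - Real.sqrt 2 * b)) =
      b / (Real.pi * (Real.sqrt 2 * a - b)) := by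
    have : 2 * a - Real.sqrt 2 * b = Real.sqrt 2 * (Real.sqrt 2 * a - b) := by
      rw [mul_sub, ← mul_assoc, hs2]
    rw [this]
    have hd : Real.sqrt 2 * a - b ≠ 0 := by linarith
    field_simp
  have e2 : (n : ℝ) / (2 * hBn n B) = 1 / (2 * N + 1) := by
    rw [hh]; field_simp
  rw [e1, e2]
  have hd : Real.sqrt 2 * a - b ≠ 0 := by linarith
  calc _ ≤ 4 / Real.pi * (b / (2 * (Real.sqrt 2 * a - b)) + Real.pi / (2 * (2 * N + 1))) / 2 := by
        gcongr
    _ = _ := by field_simp; ring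
end

section
/- Fix real exponents p > q > 1. Under the bilevel ensemble(n,p,q), let f̂ be the function learned by minimum-Σ-weighted-ℓ2-norm interpolation of constant labels 1 at the n regularly spaced points x_i = −1 + 2i/n. Then there is a constant C > 0 depending only on (p,q) such that for all n ≥ 2, the classification risk satisfies C(f̂) ≤ min{1/2, C·n^{q−p}}. In particular C(f̂) → 0 as n → ∞. -/
open MeasureTheory Filter

/-- The lifted Fourier feature map `φ : ℝ → ℝ^B`,
`φ(x) = (1/√2, sin (π x), cos (π x), …, sin (((B-1)/2) π x), cos (((B-1)/2) π x))`. -/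
noncomputable def phiF (B : ℕ) (x : ℝ) : Fin B → ℝ := fun j =>
  if j.val = 0 then 1 / Real.sqrt 2
  else if j.val % 2 = 1 then Real.sin ((((j.val + 1) / 2 : ℕ) : ℝ) * Real.pi * x)
  else Real.cos (((j.val / 2 : ℕ) : ℝ) * Real.pi * x)

/-- The `n` regularly spaced training points `x_i = -1 + 2 i / n`, `i = 1, …, n`. -/
noncomputable def xtr (n : ℕ) (i : Fin n) : ℝ := -1 + 2 * ((i : ℕ) + 1 : ℝ) / (n : ℝ)

/-- `α` interpolates the constant labels `1` at the regular grid: `Φ α = (1, …, 1)`. -/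
def Interpolates (n B : ℕ) (α : Fin B → ℝ) : Prop :=
  ∀ i : Fin n, ∑ j, α j * phiF B (xtr n i) j = 1

/-- The bilevel diagonal weights: `λ₁ = γ B` with `γ = n^{-q}` on the constant feature,
and `λ_L = (1 - γ) B / (B - 1)` on all other features. -/
noncomputable def bilevelLam (n B : ℕ) (q : ℝ) : Fin B → ℝ := fun j =>
  if j.val = 0 then (n : ℝ) ^ (-q) * (B : ℝ)
  else (1 - (n : ℝ) ^ (-q)) * (B : ℝ) / ((B : ℝ) - 1)

/-- `α̂` is a minimum-`Σ`-weighted-`ℓ₂`-norm interpolator: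
`α̂ = argmin {‖Σ^{-1/2} α‖₂ : Φ α = (1,…,1)}`, where `Σ = diag lam`. -/
def IsMinInterp (n B : ℕ) (lam : Fin B → ℝ) (α : Fin B → ℝ) : Prop :=
  Interpolates n B α ∧
    ∀ α' : Fin B → ℝ, Interpolates n B α' →
      ∑ j, (α j) ^ 2 / lam j ≤ ∑ j, (α' j) ^ 2 / lam j

/-- `B` is (the odd integer closest to `n^p` with `2n ∣ B - 1`) -- captured by `Odd B`,
`2n ∣ B - 1`, and `|B - n^p| ≤ n` (half of the spacing `2n` between admissible values). -/
def BilevelB (n B : ℕ) (p : ℝ) : Prop :=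
  Odd B ∧ 2 * n ∣ B - 1 ∧ |(B : ℝ) - (n : ℝ) ^ p| ≤ (n : ℝ)

theorem aux_range_odd (h : ℕ → ℝ) (K : ℕ) :
    ∑ j ∈ Finset.range (2 * K + 1), h j
      = h 0 + ∑ k ∈ Finset.range K, (h (2 * k + 1) + h (2 * k + 2)) := by
  induction K with
  | zero => simp
  | succ K ih =>
    rw [show 2 * (K + 1) + 1 = (2 * K + 1) + 1 + 1 by ring, Finset.sum_range_succ,
      Finset.sum_range_succ, ih, Finset.sum_range_succ]
    ring

theorem aux_kernel (n K : ℕ) (q x y : ℝ) :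
    ∑ j, bilevelLam n (2 * K + 1) q j * phiF (2 * K + 1) x j * phiF (2 * K + 1) y j
      = (n : ℝ) ^ (-q) * ((2 * K + 1 : ℕ) : ℝ) / 2
        + (1 - (n : ℝ) ^ (-q)) * ((2 * K + 1 : ℕ) : ℝ) / (((2 * K + 1 : ℕ) : ℝ) - 1)
          * ∑ k ∈ Finset.range K, Real.cos (((k + 1 : ℕ) : ℝ) * Real.pi * (x - y)) := by
  set l1 := (n : ℝ) ^ (-q) * ((2 * K + 1 : ℕ) : ℝ) with hl1
  set l2 := (1 - (n : ℝ) ^ (-q)) * ((2 * K + 1 : ℕ) : ℝ) / (((2 * K + 1 : ℕ) : ℝ) - 1) with hl2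
  let ph : ℝ → ℕ → ℝ := fun x j => if j = 0 then 1 / Real.sqrt 2
    else if j % 2 = 1 then Real.sin ((((j + 1) / 2 : ℕ) : ℝ) * Real.pi * x)
    else Real.cos (((j / 2 : ℕ) : ℝ) * Real.pi * x)
  let h : ℕ → ℝ := fun j => (if j = 0 then l1 else l2) * ph x j * ph y j
  have e : ∑ j, bilevelLam n (2 * K + 1) q j * phiF (2 * K + 1) x j * phiF (2 * K + 1) y j
      = ∑ j : Fin (2 * K + 1), h j.val := rfl
  rw [e, Fin.sum_univ_eq_sum_range, aux_range_odd, Finset.mul_sum]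
  congr 1
  · simp only [h, ph, if_true]
    have := Real.mul_self_sqrt (show (0 : ℝ) ≤ 2 by norm_num)
    have h2 : Real.sqrt 2 ≠ 0 := by positivity
    field_simp
    rw [Real.sq_sqrt (by norm_num)]
  · apply Finset.sum_congr rfl
    intro k _
    have a1 : (2 * k + 1) % 2 = 1 := by omega
    have a2 : ¬ (2 * k + 2) % 2 = 1 := by omega
    have a3 : (2 * k + 1 + 1) / 2 = k + 1 := by omega
    have a5 : ¬ 2 * k + 1 = 0 := by omega
    have a6 : ¬ 2 * k + 2 = 0 := by omega
    simp only [h, ph, if_neg a5, if_neg a6, if_pos a1, if_neg a2, a3]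
    rw [mul_sub, Real.cos_sub]
    ring

/-- discrete orthogonality -/
theorem aux_orth (n k : ℕ) (hn : 0 < n) (θ : ℝ) (hk : ¬ n ∣ k) :
    ∑ i ∈ Finset.range n, Real.cos (θ - 2 * Real.pi * k * (i + 1) / n) = 0 := by
  have hn' : (n : ℝ) ≠ 0 := by positivity
  set b := Real.pi * k / n with hb
  have hs : Real.sin b ≠ 0 := by
    intro h0
    rw [Real.sin_eq_zero_iff] at h0
    obtain ⟨m, hm⟩ := h0
    apply hk
    have : (m : ℝ) * n = k := by
      rw [hb] at hm
      field_simp at hm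
      linarith
    have h2 : m * (n : ℤ) = k := by exact_mod_cast this
    exact Int.natCast_dvd_natCast.mp ⟨m, by rw [← h2]; ring⟩
  have tel : ∀ m : ℕ, 2 * Real.sin b *
      ∑ i ∈ Finset.range m, Real.cos (θ - 2 * Real.pi * k * (i + 1) / n)
      = Real.sin (θ - b) - Real.sin (θ - b - 2 * b * m) := by
    intro m
    induction m with
    | zero => simp
    | succ m ih =>
      rw [Finset.sum_range_succ, mul_add, ih]
      have e1 : θ - b - 2 * b * m = (θ - 2 * Real.pi * k * (m + 1) / n) + b := by
        rw [hb]; field_simp; ring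
      have e2 : θ - b - 2 * b * ((m + 1 : ℕ) : ℝ) = (θ - 2 * Real.pi * k * (m + 1) / n) - b := by
        rw [hb]; push_cast; field_simp; ring
      rw [e1, e2, Real.sin_add, Real.sin_sub (θ - 2 * Real.pi * k * (m + 1) / n)]
      ring
  have := tel n
  have e3 : θ - b - 2 * b * n = (θ - b) - k * (2 * Real.pi) := by
    rw [hb]; field_simp
  rw [e3, Real.sin_sub_nat_mul_two_pi, sub_self] at this
  exact (mul_eq_zero.mp this).resolve_left (by simpa using hs)

theorem aux_orth2 (n k : ℕ) (hn : 0 < n) (θ : ℝ) (hk : n ∣ k) :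
    ∑ i ∈ Finset.range n, Real.cos (θ - 2 * Real.pi * k * (i + 1) / n) = n * Real.cos θ := by
  have hn' : (n : ℝ) ≠ 0 := by positivity
  obtain ⟨m, rfl⟩ := hk
  rw [Finset.sum_congr rfl (g := fun _ => Real.cos θ)]
  · simp
  · intro i _
    rw [show θ - 2 * Real.pi * ((n * m : ℕ) : ℝ) * (i + 1) / n
      = θ - ((m * (i + 1) : ℕ) : ℝ) * (2 * Real.pi) by push_cast; field_simp,
      Real.cos_sub_nat_mul_two_pi]

theorem aux_block (n M : ℕ) (hn : 0 < n) (g : ℕ → ℝ) :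
    ∑ k ∈ Finset.range (n * M), (if n ∣ k + 1 then g (k + 1) else 0)
      = ∑ l ∈ Finset.range M, g (n * (l + 1)) := by
  induction M with
  | zero => simp
  | succ M ih =>
    rw [Nat.mul_succ, Finset.sum_range_add, ih, Finset.sum_range_succ]
    congr 1
    rw [Finset.sum_eq_single (n - 1)]
    · have : n * M + (n - 1) + 1 = n * (M + 1) := by rw [Nat.mul_succ]; omega
      rw [this, if_pos (Dvd.intro _ rfl)]
    · intro b hb hb'
      rw [if_neg]
      rw [add_assoc, Nat.dvd_add_right (Dvd.intro _ rfl)]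
      intro hd
      have := Nat.le_of_dvd (by omega) hd
      have := Finset.mem_range.mp hb
      omega
    · intro h
      exact absurd (Finset.mem_range.mpr (by omega)) h

/-- kernel averaged over the grid -/
theorem aux_avg (n M : ℕ) (hn : 0 < n) (q x : ℝ) :
    ∑ i : Fin n, ∑ j, bilevelLam n (2 * (n * M) + 1) q j * phiF (2 * (n * M) + 1) x j
        * phiF (2 * (n * M) + 1) (xtr n i) j
      = n * ((n : ℝ) ^ (-q) * ((2 * (n * M) + 1 : ℕ) : ℝ) / 2
        + (1 - (n : ℝ) ^ (-q)) * ((2 * (n * M) + 1 : ℕ) : ℝ) / (((2 * (n * M) + 1 : ℕ) : ℝ) - 1)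
          * ∑ l ∈ Finset.range M, Real.cos (((l + 1 : ℕ) : ℝ) * (n * Real.pi * (x + 1)))) := by
  simp only [aux_kernel]
  rw [Finset.sum_add_distrib, ← Finset.mul_sum, Finset.sum_comm, mul_add]
  congr 1
  · simp
  rw [mul_left_comm (n : ℝ)]
  congr 1
  have : ∀ k ∈ Finset.range (n * M), ∑ i : Fin n,
      Real.cos (((k + 1 : ℕ) : ℝ) * Real.pi * (x - xtr n i))
      = if n ∣ k + 1 then n * Real.cos (((k + 1 : ℕ) : ℝ) * Real.pi * (x + 1)) else 0 := by
    intro k _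
    have e : ∀ i : Fin n, Real.cos (((k + 1 : ℕ) : ℝ) * Real.pi * (x - xtr n i))
        = (fun i : ℕ => Real.cos (((k + 1 : ℕ) : ℝ) * Real.pi * (x + 1)
          - 2 * Real.pi * ((k + 1 : ℕ) : ℝ) * (i + 1) / n)) i.val := by
      intro i
      simp only [xtr]
      congr 1
      ring
    refine (Finset.sum_congr rfl (fun i _ => e i)).trans
      ((Fin.sum_univ_eq_sum_range (fun i : ℕ => Real.cos (((k + 1 : ℕ) : ℝ) * Real.pi * (x + 1)
          - 2 * Real.pi * ((k + 1 : ℕ) : ℝ) * (i + 1) / n)) n).trans ?_)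
    split_ifs with h
    · exact aux_orth2 n (k + 1) hn _ h
    · exact aux_orth n (k + 1) hn _ h
  rw [Finset.sum_congr rfl this,
    aux_block n M hn (fun k => n * Real.cos ((k : ℝ) * Real.pi * (x + 1))), Finset.mul_sum]
  apply Finset.sum_congr rfl
  intro l _
  congr 2
  push_cast
  ring

/-- generic minimizer identification -/
theorem aux_min (n B : ℕ) (lam α β : Fin B → ℝ) (v : ℝ) (hl : ∀ j, 0 < lam j)
    (hα : IsMinInterp n B lam α) (hβ : Interpolates n B β)
    (hb : ∀ j, β j = lam j * (v * ∑ i : Fin n, phiF B (xtr n i) j)) : α = β := by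
  have h1 := hα.2 β hβ
  have horth : ∑ j, (α j - β j) * (β j / lam j) = 0 := by
    have e : ∀ j, (α j - β j) * (β j / lam j)
        = v * ∑ i : Fin n, (α j * phiF B (xtr n i) j - β j * phiF B (xtr n i) j) := by
      intro j
      have := (hl j).ne'
      have hbj : β j / lam j = v * ∑ i : Fin n, phiF B (xtr n i) j := by
        rw [hb j]; field_simp
      rw [hbj]
      simp only [← sub_mul, ← Finset.mul_sum]
      ring
    rw [Finset.sum_congr rfl (fun j _ => e j), ← Finset.mul_sum, Finset.sum_comm]
    simp only [Finset.sum_sub_distrib]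
    rw [Finset.sum_congr rfl (fun i _ => hα.1 i), Finset.sum_congr rfl (fun i _ => hβ i)]
    simp
  have hexp : ∑ j, (α j) ^ 2 / lam j = ∑ j, (β j) ^ 2 / lam j
      + 2 * ∑ j, (α j - β j) * (β j / lam j) + ∑ j, (α j - β j) ^ 2 / lam j := by
    rw [Finset.mul_sum, ← Finset.sum_add_distrib, ← Finset.sum_add_distrib]
    apply Finset.sum_congr rfl
    intro j _
    ring
  have hz : ∑ j, (α j - β j) ^ 2 / lam j = 0 := by
    apply le_antisymm
    · rw [horth] at hexp; linarith
    · exact Finset.sum_nonneg fun j _ => div_nonneg (sq_nonneg _) (hl j).le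
  rw [Finset.sum_eq_zero_iff_of_nonneg
    (fun j _ => div_nonneg (sq_nonneg _) (hl j).le)] at hz
  funext j
  have := hz j (Finset.mem_univ j)
  have h2 := (hl j).ne'
  rw [div_eq_zero_iff] at this
  have h3 := pow_eq_zero_iff (two_ne_zero) |>.mp (this.resolve_right h2)
  linarith

/-- closed form of the learned function -/
theorem aux_form (n M : ℕ) (hn : 2 ≤ n) (q : ℝ) (hq : 1 < q) (B : ℕ)
    (hB : B = 2 * (n * M) + 1) (α : Fin B → ℝ)
    (hα : IsMinInterp n B (bilevelLam n B q) α) :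
    ∃ c : ℝ, 0 < c ∧ ∀ x, ∑ j, α j * phiF B x j
      = c * ((n : ℝ) ^ (-q) * (B : ℝ) / 2
        + (1 - (n : ℝ) ^ (-q)) * (B : ℝ) / ((B : ℝ) - 1)
          * ∑ l ∈ Finset.range M, Real.cos (((l + 1 : ℕ) : ℝ) * (n * Real.pi * (x + 1)))) := by
  have hn1 : (1 : ℝ) < n := by exact_mod_cast hn
  have hn0 : (0 : ℝ) < n := by linarith
  have hg0 : 0 < (n : ℝ) ^ (-q) := Real.rpow_pos_of_pos hn0 _
  have hg1 : (n : ℝ) ^ (-q) < 1 := Real.rpow_lt_one_of_one_lt_of_neg hn1 (by linarith)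
  have havg := aux_avg n M (by omega) q
  rw [← hB] at havg
  have hB1 : (1 : ℝ) ≤ (B : ℝ) := by rw [hB]; exact_mod_cast Nat.le_add_left _ _
  have hl2 : 0 ≤ (1 - (n : ℝ) ^ (-q)) * (B : ℝ) / ((B : ℝ) - 1) :=
    div_nonneg (mul_nonneg (by linarith) (by linarith)) (by linarith)
  have hl1 : 0 < (n : ℝ) ^ (-q) * (B : ℝ) := mul_pos hg0 (by linarith)
  set L2 := (1 - (n : ℝ) ^ (-q)) * (B : ℝ) / ((B : ℝ) - 1) with hL2
  set L1 := (n : ℝ) ^ (-q) * (B : ℝ) with hL1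
  have hlam : ∀ j, 0 < bilevelLam n B q j := by
    intro j
    unfold bilevelLam
    split_ifs with h
    · exact hl1
    · have : 1 < B := by have := j.isLt; omega
      have : (1 : ℝ) < (B : ℝ) := by exact_mod_cast this
      exact div_pos (mul_pos (by linarith) (by linarith)) (by linarith)
  set D := L1 / 2 + L2 * M with hD
  have hD0 : 0 < D := by
    have : 0 ≤ L2 * M := mul_nonneg hl2 (Nat.cast_nonneg M)
    linarith
  let β : Fin B → ℝ := fun j =>
    bilevelLam n B q j * (1 / (n * D) * ∑ i : Fin n, phiF B (xtr n i) j)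
  have hβx : ∀ x, ∑ j, β j * phiF B x j = (1 / D) * (L1 / 2 + L2 *
      ∑ l ∈ Finset.range M, Real.cos (((l + 1 : ℕ) : ℝ) * (n * Real.pi * (x + 1)))) := by
    intro x
    have h := havg x
    rw [Finset.sum_comm] at h
    have e : ∀ j, β j * phiF B x j = 1 / (n * D) *
        ∑ i : Fin n, bilevelLam n B q j * phiF B x j * phiF B (xtr n i) j := by
      intro j
      simp only [β, ← Finset.mul_sum]
      ring
    rw [Finset.sum_congr rfl (fun j _ => e j), ← Finset.mul_sum, h]
    generalize ∑ l ∈ Finset.range M,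
      Real.cos (((l + 1 : ℕ) : ℝ) * (n * Real.pi * (x + 1))) = T
    field_simp
  have hβ : Interpolates n B β := by
    intro i
    rw [hβx]
    have : ∀ l ∈ Finset.range M,
        Real.cos (((l + 1 : ℕ) : ℝ) * (n * Real.pi * (xtr n i + 1))) = 1 := by
      intro l _
      have : ((l + 1 : ℕ) : ℝ) * (n * Real.pi * (xtr n i + 1))
          = (((l + 1) * (i.val + 1) : ℕ) : ℝ) * (2 * Real.pi) := by
        unfold xtr; push_cast; field_simp; ring
      rw [this, Real.cos_nat_mul_two_pi]
    rw [Finset.sum_congr rfl this]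
    simp only [Finset.sum_const, Finset.card_range, nsmul_eq_mul, mul_one]
    rw [← hD]; field_simp
  have := aux_min n B _ α β _ hlam hα hβ (fun j => rfl)
  subst this
  exact ⟨1 / D, by positivity, hβx⟩

theorem aux_dirichlet (M : ℕ) (u : ℝ) :
    2 * Real.sin u * ∑ l ∈ Finset.range M, Real.cos (((l + 1 : ℕ) : ℝ) * (2 * u))
      = Real.sin ((2 * M + 1) * u) - Real.sin u := by
  induction M with
  | zero => simp
  | succ M ih =>
    rw [Finset.sum_range_succ, mul_add, ih]
    have e1 : (2 * (M : ℝ) + 1) * u = ((M + 1 : ℕ) : ℝ) * (2 * u) - u := by push_cast; ring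
    have e2 : (2 * ((M + 1 : ℕ) : ℝ) + 1) * u = ((M + 1 : ℕ) : ℝ) * (2 * u) + u := by ring
    rw [e1, e2, Real.sin_add, Real.sin_sub]
    ring

/-- cover bound -/
theorem aux_cover {ι : Type*} (s : Finset ι) (S : Set ℝ) (a : ι → ℝ) (L : ℝ) (hL : 0 ≤ L)
    (h : ∀ x ∈ S, ∃ i ∈ s, x ∈ Set.Icc (a i) (a i + L)) :
    (volume S).toReal ≤ s.card * L := by
  have h1 : volume S ≤ ENNReal.ofReal (s.card * L) := by
    calc volume S ≤ volume (⋃ i ∈ s, Set.Icc (a i) (a i + L)) := by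
          apply measure_mono
          intro x hx
          obtain ⟨i, hi, hx⟩ := h x hx
          exact Set.mem_biUnion (Finset.mem_coe.mpr hi) hx
      _ ≤ ∑ i ∈ s, volume (Set.Icc (a i) (a i + L)) := measure_biUnion_finset_le _ _
      _ = ENNReal.ofReal (s.card * L) := by
          simp only [Real.volume_Icc, add_sub_cancel_left, Finset.sum_const, nsmul_eq_mul]
          rw [ENNReal.ofReal_mul (by positivity), ENNReal.ofReal_natCast]
  exact ENNReal.toReal_le_of_le_ofReal (by positivity) h1

/-- decompose `u ∈ [0, nπ]` -/
theorem aux_split (n : ℕ) (hn : 0 < n) (u : ℝ) (h0 : 0 ≤ u) (h1 : u ≤ n * Real.pi) :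
    ∃ i : ℕ, i < n ∧ 0 ≤ u - i * Real.pi ∧ u - i * Real.pi ≤ Real.pi := by
  have hp := Real.pi_pos
  by_cases h : u = n * Real.pi
  · refine ⟨n - 1, by omega, ?_, ?_⟩ <;> rw [h, Nat.cast_sub (by omega)] <;> push_cast <;> nlinarith
  · have hlt : u / Real.pi < n := by
      rw [div_lt_iff₀ hp]; exact lt_of_le_of_ne h1 h
    have hnn : 0 ≤ u / Real.pi := by positivity
    refine ⟨⌊u / Real.pi⌋₊, (Nat.floor_lt hnn).mpr hlt, ?_, ?_⟩
    · have := Nat.floor_le hnn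
      rw [le_div_iff₀ hp] at this
      linarith
    · have := Nat.lt_floor_add_one (u / Real.pi)
      rw [div_lt_iff₀ hp] at this
      linarith

theorem aux_cos_shift (M i : ℕ) (u : ℝ) :
    ∑ l ∈ Finset.range M, Real.cos (((l + 1 : ℕ) : ℝ) * (2 * u))
     = ∑ l ∈ Finset.range M, Real.cos (((l + 1 : ℕ) : ℝ) * (2 * (u - i * Real.pi))) := by
  apply Finset.sum_congr rfl
  intro l _
  rw [show ((l + 1 : ℕ) : ℝ) * (2 * (u - i * Real.pi))
    = ((l + 1 : ℕ) : ℝ) * (2 * u) - (((l + 1) * i : ℕ) : ℝ) * (2 * Real.pi) by push_cast; ring,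
    Real.cos_sub_nat_mul_two_pi]

/-- small sine localisation -/
theorem aux_small (w s : ℝ) (h0 : 0 ≤ w) (h1 : w ≤ Real.pi) (h : Real.sin w ≤ s) :
    w ≤ Real.pi / 2 * s ∨ Real.pi - w ≤ Real.pi / 2 * s := by
  have hp := Real.pi_pos
  rcases le_total w (Real.pi / 2) with h2 | h2
  · left
    have := Real.mul_le_sin h0 h2
    have h3 : 2 / Real.pi * w ≤ s := this.trans h
    rw [div_mul_eq_mul_div, div_le_iff₀ hp] at h3
    linarith
  · right
    have := Real.mul_le_sin (x := Real.pi - w) (by linarith) (by linarith)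
    rw [Real.sin_pi_sub] at this
    have h3 := this.trans h
    rw [div_mul_eq_mul_div, div_le_iff₀ hp] at h3
    linarith

/-- localisation of the bad set for the one half bound, within a period -/
theorem aux_half_loc (M : ℕ) (hM : 1 ≤ M) (w : ℝ) (h0 : 0 ≤ w) (h1 : w ≤ Real.pi)
    (h : ∑ l ∈ Finset.range M, Real.cos (((l + 1 : ℕ) : ℝ) * (2 * w)) ≤ - (M / (2 * M + 1))) :
    ∃ k < M, (2 * k + 1) * Real.pi - Real.pi / (2 * (2 * M + 1)) ≤ (2 * M + 1) * w ∧
      (2 * M + 1) * w ≤ (2 * k + 2) * Real.pi + Real.pi / (2 * (2 * M + 1)) := by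
  have hp := Real.pi_pos
  have hM' : (1 : ℝ) ≤ M := by exact_mod_cast hM
  have hMnn : (0 : ℝ) ≤ M / (2 * M + 1) := by positivity
  have hw0 : 0 < w := by
    rcases h0.lt_or_eq with h2 | h2
    · exact h2
    · exfalso
      rw [← h2] at h
      simp at h
      linarith
  have hwp : w < Real.pi := by
    rcases h1.lt_or_eq with h2 | h2
    · exact h2
    · exfalso
      rw [aux_cos_shift M 1 w, h2] at h
      simp at h
      linarith
  have hsw : 0 < Real.sin w := Real.sin_pos_of_pos_of_lt_pi hw0 hwp
  have hD := aux_dirichlet M w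
  obtain ⟨N, hN⟩ : ∃ N : ℝ, N = 2 * M + 1 := ⟨_, rfl⟩
  rw [← hN] at h hMnn hD ⊢
  have hN3 : 3 ≤ N := by linarith
  have hN0 : 0 < N := by linarith
  have hsv : Real.sin (N * w) ≤ Real.sin w / N := by
    have h3 := mul_le_mul_of_nonneg_left h (by linarith : 0 ≤ 2 * Real.sin w)
    have h4 : Real.sin w / N = Real.sin w + 2 * Real.sin w * -(M / N) := by
      field_simp; rw [hN]; ring
    linarith
  have hlt : Real.sin w / N < Real.sin w := div_lt_self hsw (by linarith)
  have hsv1 : Real.sin (N * w) ≤ 1 / N :=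
    hsv.trans (div_le_div_of_nonneg_right (Real.sin_le_one w) hN0.le)
  have heps : Real.pi / 2 * (1 / N) = Real.pi / (2 * N) := by field_simp
  have heps0 : 0 < Real.pi / (2 * N) := by positivity
  have heps2 : Real.pi / (2 * N) ≤ Real.pi / 2 :=
    div_le_div_of_nonneg_left hp.le (by norm_num) (by linarith)
  have contra : ∀ y, 0 < y → N * y ≤ Real.pi / (2 * N) → Real.sin y ≤ Real.sin (N * y) := by
    intro y hy hy2
    apply Real.sin_le_sin_of_le_of_le_pi_div_two
    · linarith
    · linarith
    · nlinarith
  obtain ⟨i, hi, hr0, hr1⟩ := aux_split (2 * M + 1) (by omega) (N * w) (by positivity)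
    (by push_cast; rw [← hN]; exact mul_le_mul_of_nonneg_left h1 hN0.le)
  rcases Nat.even_or_odd' i with ⟨k, hk | hk⟩
  · have hik : (i : ℝ) = 2 * k := by rw [hk]; push_cast; ring
    rw [hik] at hr0 hr1
    have hsr : Real.sin (N * w - 2 * k * Real.pi) = Real.sin (N * w) := by
      rw [show N * w - 2 * k * Real.pi = N * w - k * (2 * Real.pi) by ring,
        Real.sin_sub_nat_mul_two_pi]
    rcases aux_small _ (1 / N) hr0 hr1 (by rw [hsr]; exact hsv1) with h5 | h5
    · rw [heps] at h5
      rcases Nat.eq_zero_or_pos k with hk0 | hk0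
      · exfalso
        rw [hk0] at h5
        have := contra w hw0 (by simpa using h5)
        linarith
      · obtain ⟨m, rfl⟩ : ∃ m, k = m + 1 := ⟨k - 1, by omega⟩
        refine ⟨m, by omega, ?_, ?_⟩ <;> push_cast at * <;> linarith
    · rw [heps] at h5
      rcases Nat.lt_or_ge k M with hkM | hkM
      · refine ⟨k, hkM, ?_, ?_⟩ <;> linarith
      · exfalso
        have hkM' : M = k := by omega
        subst hkM'
        have e : N * (Real.pi - w) = Real.pi - (N * w - 2 * M * Real.pi) := by rw [hN]; ring
        have := contra (Real.pi - w) (by linarith) (by rw [e]; exact h5)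
        rw [e, Real.sin_pi_sub, Real.sin_pi_sub, hsr] at this
        linarith
  · have hik : (i : ℝ) = 2 * k + 1 := by rw [hk]; push_cast; ring
    rw [hik] at hr0 hr1
    refine ⟨k, by omega, ?_, ?_⟩ <;> linarith

theorem aux_main (p q : ℝ) (hq : 1 < q) (hpq : q < p) (n : ℕ) (hn : 2 ≤ n) (B : ℕ)
    (hB : BilevelB n B p) (α : Fin B → ℝ) (hα : IsMinInterp n B (bilevelLam n B q) α) :
    classRisk (fun x => ∑ j, α j * phiF B x j) ≤ 1 / 2 ∧
    classRisk (fun x => ∑ j, α j * phiF B x j) ≤ 8 * (n : ℝ) ^ (q - p) := by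
  have hp := Real.pi_pos
  obtain ⟨hodd, ⟨M, hM⟩, habs⟩ := hB
  have hBM : B = 2 * (n * M) + 1 := by
    have := hodd.pos
    rw [mul_assoc] at hM
    omega
  subst hBM
  obtain ⟨c, hc, hf⟩ := aux_form n M hn q hq _ rfl α hα
  have hn2 : (2 : ℝ) ≤ n := by exact_mod_cast hn
  have hn0 : (0 : ℝ) < n := by linarith
  obtain ⟨Q, hQ⟩ : ∃ Q, Q = (n : ℝ) ^ q := ⟨_, rfl⟩
  have hQ1 : 1 < Q := by rw [hQ]; exact Real.one_lt_rpow (by linarith) (by linarith)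
  have hQp : Q ≤ (n : ℝ) ^ p := by
    rw [hQ]; exact Real.rpow_le_rpow_of_exponent_le (by linarith) hpq.le
  have hg : (n : ℝ) ^ (-q) = 1 / Q := by rw [Real.rpow_neg hn0.le, hQ, one_div]
  have hP0 : 0 < (n : ℝ) ^ p := Real.rpow_pos_of_pos hn0 p
  have hbound : (n : ℝ) ^ p ≤ 2 * (n * M) + 1 + n := by
    have := (abs_le.mp habs).1
    push_cast at this
    linarith
  have hrp : (n : ℝ) ^ (q - p) = Q / (n : ℝ) ^ p := by rw [Real.rpow_sub hn0, hQ]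
  have hrp0 : 0 < (n : ℝ) ^ (q - p) := Real.rpow_pos_of_pos hn0 _
  set S : Set ℝ := {x ∈ Set.Icc (-1 : ℝ) 1 |
    (fun x => ∑ j, α j * phiF (2 * (n * M) + 1) x j) x ≤ 0} with hS
  have hrisk : classRisk (fun x => ∑ j, α j * phiF (2 * (n * M) + 1) x j)
    = (volume S).toReal / 2 := rfl
  rw [hrisk]
  clear_value S
  rcases Nat.eq_zero_or_pos M with hM0 | hM0
  · have : S = ∅ := by
      rw [Set.eq_empty_iff_forall_notMem]
      intro x hx
      rw [hS] at hx
      have h2 := hx.2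
      simp only [hf x] at h2
      rw [hM0, hg] at h2
      simp at h2
      have : 0 < c * (Q⁻¹ / 2) := by positivity
      linarith
    rw [this]
    simp
    positivity
  have hM1 : (1 : ℝ) ≤ M := by exact_mod_cast hM0
  have hnM : (0 : ℝ) < n * M := by positivity
  -- key facts for bad points
  have hkey : ∀ x ∈ S, ∃ i < n, ∃ w : ℝ, 0 ≤ w ∧ w ≤ Real.pi ∧
      x = -1 + 2 / (n * Real.pi) * (i * Real.pi + w) ∧
      n * M ≤ (Q - 1) *
        (-∑ l ∈ Finset.range M, Real.cos (((l + 1 : ℕ) : ℝ) * (2 * w))) := by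
    intro x hx
    rw [hS] at hx
    obtain ⟨⟨hx0, hx1⟩, h2⟩ := hx
    simp only [hf x] at h2
    obtain ⟨u, hu⟩ : ∃ u, u = n * Real.pi * (x + 1) / 2 := ⟨_, rfl⟩
    have hu2 : n * Real.pi * (x + 1) = 2 * u := by rw [hu]; ring
    rw [hu2] at h2
    have hnp : 0 < n * Real.pi := by positivity
    obtain ⟨i, hi, hw0, hw1⟩ := aux_split n (by omega) u
      (by rw [hu]; exact div_nonneg (mul_nonneg hnp.le (by linarith)) (by norm_num))
      (by rw [hu]; nlinarith)
    rw [aux_cos_shift M i u] at h2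
    refine ⟨i, hi, u - i * Real.pi, hw0, hw1, ?_, ?_⟩
    · rw [hu]; field_simp; ring
    · obtain ⟨T, hT⟩ : ∃ T, T = ∑ l ∈ Finset.range M,
        Real.cos (((l + 1 : ℕ) : ℝ) * (2 * (u - i * Real.pi))) := ⟨_, rfl⟩
      rw [← hT] at h2 ⊢
      have h3 := nonpos_of_mul_nonpos_right h2 hc
      rw [hg] at h3
      push_cast at h3
      have e : 1 / Q * (2 * (n * M) + 1) / 2 + (1 - 1 / Q) * (2 * (n * M) + 1)
          / (2 * ((n : ℝ) * M) + 1 - 1) * T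
          = ((2 * (n * M) + 1) / (2 * Q * (n * M))) * (n * M + (Q - 1) * T) := by
        rw [add_sub_cancel_right]
        field_simp
      rw [e] at h3
      have h4 := nonpos_of_mul_nonpos_right h3 (by positivity)
      linarith
  constructor
  · obtain ⟨N, hN⟩ : ∃ N : ℝ, N = 2 * M + 1 := ⟨_, rfl⟩
    have hN0 : 0 < N := by linarith
    have hcov := aux_cover (Finset.range n ×ˢ Finset.range M) S
      (fun ik => -1 + 2 / (n * Real.pi) * (ik.1 * Real.pi +
        ((2 * ik.2 + 1) * Real.pi - Real.pi / (2 * N)) / N))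
      (2 / n * ((N + 1) / N ^ 2)) (by positivity) (by
        intro x hx
        obtain ⟨i, hi, w, hw0, hw1, hxe, hT⟩ := hkey x hx
        obtain ⟨k, hk, hk1, hk2⟩ := aux_half_loc M hM0 w hw0 hw1 (by
          obtain ⟨T, hTe⟩ : ∃ T, T = ∑ l ∈ Finset.range M,
            Real.cos (((l + 1 : ℕ) : ℝ) * (2 * w)) := ⟨_, rfl⟩
          rw [← hTe] at hT ⊢
          rw [← hN]
          have hTn : 0 < -T := by
            by_contra hcon
            have : (Q - 1) * (-T) ≤ 0 :=
              mul_nonpos_of_nonneg_of_nonpos (by linarith) (by linarith)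
            linarith
          have h6 : (Q - 1) * (-T) ≤ (n * N) * (-T) := by
            apply mul_le_mul_of_nonneg_right _ hTn.le
            rw [hN]; linarith
          have h7 : (n : ℝ) * M ≤ n * (N * (-T)) := by linarith
          have h8 := le_of_mul_le_mul_left h7 hn0
          have h9 : M / N ≤ -T := by rw [div_le_iff₀ hN0]; linarith
          linarith)
        rw [← hN] at hk1 hk2
        refine ⟨(i, k), by simp [hi, hk], ?_, ?_⟩
        · simp only
          rw [hxe]
          gcongr
          rw [div_le_iff₀ hN0]; linarith
        · simp only
          rw [hxe]
          have e : -1 + 2 / (n * Real.pi) * (i * Real.pi +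
              ((2 * k + 1) * Real.pi - Real.pi / (2 * N)) / N) + 2 / n * ((N + 1) / N ^ 2)
              = -1 + 2 / (n * Real.pi) * (i * Real.pi +
              ((2 * k + 2) * Real.pi + Real.pi / (2 * N)) / N) := by
            field_simp; ring
          rw [e]
          gcongr
          rw [le_div_iff₀ hN0]; linarith)
    rw [Finset.card_product, Finset.card_range, Finset.card_range] at hcov
    have : ((n * M : ℕ) : ℝ) * (2 / n * ((N + 1) / N ^ 2)) ≤ 1 := by
      have e : ((n * M : ℕ) : ℝ) * (2 / n * ((N + 1) / N ^ 2)) = (2 * M * (N + 1)) / N ^ 2 := by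
        push_cast; field_simp
      rw [e, div_le_one (by positivity), hN]
      nlinarith
    linarith
  · obtain ⟨s, hs⟩ : ∃ s, s = Q / (n * M) := ⟨_, rfl⟩
    have hs0 : 0 < s := by rw [hs]; positivity
    have hcov := aux_cover (Finset.range (n + 1)) S
      (fun i => -1 + 2 / (n * Real.pi) * (i * Real.pi - Real.pi / 2 * s))
      (2 * s / n) (by positivity) (by
        intro x hx
        obtain ⟨i, hi, w, hw0, hw1, hxe, hT⟩ := hkey x hx
        have hD := aux_dirichlet M w
        obtain ⟨T, hTe⟩ : ∃ T, T = ∑ l ∈ Finset.range M,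
            Real.cos (((l + 1 : ℕ) : ℝ) * (2 * w)) := ⟨_, rfl⟩
        rw [← hTe] at hT hD
        have hsw := Real.sin_nonneg_of_nonneg_of_le_pi hw0 hw1
        have h1 : Real.sin w * (-T) ≤ 1 := by
          have := Real.neg_one_le_sin ((2 * M + 1) * w)
          have := Real.sin_le_one w
          linarith
        have h2 : Real.sin w ≤ s := by
          rw [hs, le_div_iff₀ hnM]
          have h3 := mul_le_mul_of_nonneg_left hT hsw
          have h4 := mul_le_mul_of_nonneg_left h1 (by linarith : 0 ≤ Q - 1)
          linarith
        have aux : ∀ m : ℕ, m * Real.pi - Real.pi / 2 * s ≤ i * Real.pi + w →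
            i * Real.pi + w ≤ m * Real.pi + Real.pi / 2 * s →
            x ∈ Set.Icc (-1 + 2 / (n * Real.pi) * (m * Real.pi - Real.pi / 2 * s))
              (-1 + 2 / (n * Real.pi) * (m * Real.pi - Real.pi / 2 * s) + 2 * s / n) := by
          intro m hm1 hm2
          rw [hxe]
          constructor
          · gcongr
          · have e : -1 + 2 / (n * Real.pi) * (m * Real.pi - Real.pi / 2 * s) + 2 * s / n
              = -1 + 2 / (n * Real.pi) * (m * Real.pi + Real.pi / 2 * s) := by
              field_simp; ring
            rw [e]
            gcongr
        have hps : 0 < Real.pi / 2 * s := by positivity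
        rcases aux_small w s hw0 hw1 h2 with h5 | h5
        · exact ⟨i, by simp; omega, aux i (by linarith) (by linarith)⟩
        · refine ⟨i + 1, by simp; omega, aux (i + 1) ?_ ?_⟩ <;> push_cast <;> linarith)
    rw [Finset.card_range] at hcov
    have h1 : ((n + 1 : ℕ) : ℝ) * (2 * s / n) ≤ 4 * s := by
      rw [← mul_div_assoc, div_le_iff₀ hn0]
      push_cast
      nlinarith
    have h2 : s ≤ 4 * (n : ℝ) ^ (q - p) := by
      rw [hs, hrp, ← mul_div_assoc, div_le_div_iff₀ hnM hP0]
      have : (n : ℝ) ^ p ≤ 4 * (n * M) := by nlinarith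
      nlinarith
    linarith

/-- **Classification risk in the bilevel ensemble.**  Fix `p > q > 1`.  There is a constant
`C > 0` depending only on `(p, q)` such that for all `n ≥ 2`, the minimum-`Σ`-weighted-
`ℓ₂`-norm interpolator `f̂` of constant labels at the `n` regularly spaced points satisfies
`C(f̂) ≤ min (1/2) (C n^{q-p})`; in particular `C(f̂) → 0` as `n → ∞`. -/
theorem stmt_6 (p q : ℝ) (hq : 1 < q) (hpq : q < p) :
    (∃ C : ℝ, 0 < C ∧ ∀ n : ℕ, 2 ≤ n → ∀ B : ℕ, BilevelB n B p →
      ∀ αhat : Fin B → ℝ, IsMinInterp n B (bilevelLam n B q) αhat →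
        classRisk (fun x => ∑ j, αhat j * phiF B x j) ≤
          min (1 / 2) (C * (n : ℝ) ^ (q - p))) ∧
    (∀ (Bf : ℕ → ℕ) (αf : (n : ℕ) → Fin (Bf n) → ℝ),
      (∀ n : ℕ, 2 ≤ n → BilevelB n (Bf n) p ∧
          IsMinInterp n (Bf n) (bilevelLam n (Bf n) q) (αf n)) →
      Tendsto (fun n => classRisk (fun x => ∑ j, αf n j * phiF (Bf n) x j))
        atTop (nhds 0)) := by
  refine ⟨⟨8, by norm_num, ?_⟩, ?_⟩
  · intro n hn B hB α hα
    have h := aux_main p q hq hpq n hn B hB α hα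
    exact le_min h.1 h.2
  · intro Bf αf h
    have hlim : Tendsto (fun n : ℕ => 8 * (n : ℝ) ^ (q - p)) atTop (nhds 0) := by
      have h1 := (tendsto_rpow_neg_atTop (by linarith : 0 < p - q)).comp
        (tendsto_natCast_atTop_atTop (R := ℝ))
      have h2 := h1.const_mul 8
      simpa [Function.comp_def] using h2
    refine tendsto_of_tendsto_of_tendsto_of_le_of_le' tendsto_const_nhds hlim ?_ ?_
    · exact Eventually.of_forall fun n => div_nonneg ENNReal.toReal_nonneg (by norm_num)
    · filter_upwards [eventually_ge_atTop 2] with n hn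
      exact (aux_main p q hq hpq n hn (Bf n) (h n hn).1 (αf n) (h n hn).2).2
end

section
/- Fix real exponents p > 1, q > 1 and T > 6p − 1. For each n, let f̂_n be the minimum-Σ-weighted-ℓ2-norm Fourier interpolator of constant labels at the n regularly spaced points, and let ĝ_n be the minimum-ℓ2-norm interpolator built on d = n^T random-Fourier-sum (RFS) features whose Gaussian weight vectors are i.i.d. N(0, Σ(n,p,q)). Then the classification risk of ĝ_n converges to that of f̂_n: for every δ > 0, the probability (over the Gaussian weights) that |C(ĝ_n) − C(f̂_n)| > δ tends to 0 as n → ∞; in particular lim_{n→∞} C(ĝ_n) = lim_{n→∞} C(f̂_n) in probability. -/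
open MeasureTheory Filter ProbabilityTheory

/-- The RFS learned function `ĝ(x) = ∑_i β_i ⟨z_i, φ(x)⟩`, for coefficients `β` on the
RFS features generated by the Gaussian weight matrix `W` (rows `z_i ∈ ℝ^B`). -/
noncomputable def rfsFun (B d : ℕ) (W : Fin d → Fin B → ℝ) (β : Fin d → ℝ) (x : ℝ) : ℝ :=
  ∑ i, β i * ∑ j, W i j * phiF B x j

/-- `β` interpolates the constant labels `1` on the RFS features: `Φ^RFS β = (1, …, 1)`. -/
def RFSInterpolates (n B d : ℕ) (W : Fin d → Fin B → ℝ) (β : Fin d → ℝ) : Prop :=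
  ∀ i : Fin n, rfsFun B d W β (xtr n i) = 1

/-- The distribution of the RFS weight matrix: `d` i.i.d. rows, each row Gaussian
`N(0, Σ(n,p,q))` in `ℝ^B` (with `Σ` diagonal, so the row is a product of scalar
Gaussians `N(0, λ_j)`). -/
noncomputable def rfsMeasure (n B d : ℕ) (q : ℝ) : Measure (Fin d → Fin B → ℝ) :=
  Measure.pi fun _ : Fin d =>
    Measure.pi fun j : Fin B => gaussianReal 0 (bilevelLam n B q j).toNNReal


lemma quarter_aux (y h : ℝ) (hh0 : 0 ≤ h) (hh : h ≤ y) (hy : y ≤ Real.pi / 2 - h) (k : ℕ) :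
    Real.sin h ≤ |Real.cos (y + k * (Real.pi / 2))| ∧
      Real.sin h ≤ |Real.sin (y + k * (Real.pi / 2))| := by
  induction k with
  | zero =>
    simp only [Nat.cast_zero, zero_mul, add_zero]
    refine ⟨le_trans ?_ (le_abs_self _), le_trans ?_ (le_abs_self _)⟩
    · rw [← Real.sin_pi_div_two_sub]
      apply Real.sin_le_sin_of_le_of_le_pi_div_two <;> linarith [Real.pi_pos]
    · apply Real.sin_le_sin_of_le_of_le_pi_div_two <;> linarith [Real.pi_pos]
  | succ k ih =>
    have e : y + ((k + 1 : ℕ) : ℝ) * (Real.pi / 2)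
        = (y + k * (Real.pi / 2)) + Real.pi / 2 := by push_cast; ring
    rw [e, Real.cos_add_pi_div_two, Real.sin_add_pi_div_two, abs_neg]
    exact ⟨ih.2, ih.1⟩

lemma quarter_sin' (v w : ℝ) (k : ℕ) (h0 : k * (Real.pi / 2) ≤ w) (hwv : w ≤ v)
    (h1 : v ≤ (k + 1) * (Real.pi / 2)) :
    2 * ((v - w) / Real.pi) ^ 2 ≤ |Real.sin v - Real.sin w| := by
  have hpi := Real.pi_pos
  rw [Real.sin_sub_sin, abs_mul, abs_mul]
  set h := (v - w) / 2 with hh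
  have hh0 : 0 ≤ h := by rw [hh]; linarith
  have hle : h ≤ Real.pi / 2 := by rw [hh]; nlinarith
  have hq := (quarter_aux ((v + w) / 2 - k * (Real.pi / 2)) h hh0 (by rw [hh]; linarith)
    (by rw [hh]; linarith) k).1
  rw [sub_add_cancel] at hq
  have hj := Real.mul_le_sin hh0 hle
  have hj0 : 0 ≤ 2 / Real.pi * h := by positivity
  have e : 2 * ((v - w) / Real.pi) ^ 2 = 2 * (2 / Real.pi * h) * (2 / Real.pi * h) := by
    rw [hh]; field_simp
  rw [e, abs_of_nonneg (by norm_num : (0:ℝ) ≤ 2), abs_of_nonneg (hj0.trans hj)]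
  have := hj.trans hq
  exact mul_le_mul (by linarith) this hj0 (by linarith)

lemma quarter_sin (v w : ℝ) (k : ℕ) (h0 : k * (Real.pi / 2) ≤ w) (h0' : k * (Real.pi / 2) ≤ v)
    (h1 : v ≤ (k + 1) * (Real.pi / 2)) (h1' : w ≤ (k + 1) * (Real.pi / 2)) :
    2 * ((v - w) / Real.pi) ^ 2 ≤ |Real.sin v - Real.sin w| := by
  rcases le_total w v with h | h
  · exact quarter_sin' v w k h0 h h1
  · have := quarter_sin' w v k h0' h h1'
    rw [abs_sub_comm]
    convert this using 1
    ring

/-- anti-concentration -/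
lemma anticonc (n N : ℕ) (hn : 0 < n) (hN : 0 < N) (s η : ℝ) :
    volume {x ∈ Set.Icc (-1 : ℝ) 1 |
        |Real.sin (N * (n * Real.pi * (x + 1) / 2)) - s * Real.sin (n * Real.pi * (x + 1) / 2)|
          ≤ η} ≤ ENNReal.ofReal (4 * Real.sqrt (η + |s| / N)) := by
  set A := {x ∈ Set.Icc (-1 : ℝ) 1 |
        |Real.sin (N * (n * Real.pi * (x + 1) / 2)) - s * Real.sin (n * Real.pi * (x + 1) / 2)|
          ≤ η} with hA
  have hpi := Real.pi_pos
  have hnR : (0:ℝ) < n := by exact_mod_cast hn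
  have hNR : (0:ℝ) < N := by exact_mod_cast hN
  set R := Real.sqrt (η + |s| / N) with hR
  have hR0 : 0 ≤ R := Real.sqrt_nonneg _
  let J : ℕ → Set ℝ := fun k => {x | (k : ℝ) ≤ N * n * (x + 1) ∧ N * n * (x + 1) ≤ k + 1}
  have hcov : A ⊆ ⋃ k ∈ Finset.range (2 * N * n), A ∩ J k := by
    intro x hx
    have hx1 := hx.1
    simp only [Set.mem_iUnion]
    have hpos : 0 ≤ N * n * (x + 1) := by
      have : 0 ≤ x + 1 := by linarith [hx1.1]
      positivity
    rcases eq_or_lt_of_le hx1.2 with h1 | h1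
    · refine ⟨2 * N * n - 1, Finset.mem_range.2 ?_, hx, ?_⟩
      · have : 0 < 2 * N * n := by positivity
        omega
      · have : 1 ≤ 2 * N * n := by
          have : 0 < 2 * N * n := by positivity
          omega
        simp only [J, Set.mem_ofPred_eq, h1]
        push_cast [Nat.cast_sub this]
        constructor <;> linarith
    · refine ⟨⌊(N * n * (x + 1) : ℝ)⌋₊, Finset.mem_range.2 ?_, hx, ?_⟩
      · rw [Nat.floor_lt hpos]
        push_cast
        have : (0:ℝ) < N * n := by positivity
        nlinarith
      · exact ⟨Nat.floor_le hpos, (Nat.lt_floor_add_one _).le⟩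
  have hpiece : ∀ k, volume (A ∩ J k) ≤ ENNReal.ofReal (2 / (N * n) * R) := by
    intro k
    refine (Real.volume_le_diam _).trans ?_
    refine Metric.ediam_le ?_
    rintro x ⟨hx, hxk⟩ y ⟨hy, hyk⟩
    rw [edist_dist]
    apply ENNReal.ofReal_le_ofReal
    rw [Real.dist_eq]
    simp only [J, Set.mem_ofPred_eq] at hxk hyk
    have hq := quarter_sin (N * (n * Real.pi * (x + 1) / 2)) (N * (n * Real.pi * (y + 1) / 2)) k
      (by nlinarith) (by nlinarith) (by nlinarith) (by nlinarith)
    have hx2 := hx.2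
    have hy2 := hy.2
    have hlip : |Real.sin (n * Real.pi * (x + 1) / 2) - Real.sin (n * Real.pi * (y + 1) / 2)|
        ≤ Real.pi / (2 * N) := by
      have h1 := Real.abs_sin_sub_sin_le (n * Real.pi * (x + 1) / 2) (n * Real.pi * (y + 1) / 2)
      refine h1.trans ?_
      have e : n * Real.pi * (x + 1) / 2 - n * Real.pi * (y + 1) / 2
        = Real.pi / (2 * N) * (N * n * (x + 1) - N * n * (y + 1)) := by field_simp
      rw [e, abs_mul, abs_of_pos (by positivity : 0 < Real.pi / (2 * N))]
      have : |N * n * (x + 1) - N * n * (y + 1)| ≤ (1:ℝ) := by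
        rw [abs_le]; constructor <;> linarith [hxk.1, hxk.2, hyk.1, hyk.2]
      have h2 : 0 ≤ Real.pi / (2 * N) := by positivity
      nlinarith
    set a := Real.sin (N * (n * Real.pi * (x + 1) / 2))
    set b := Real.sin (N * (n * Real.pi * (y + 1) / 2))
    set c := Real.sin (n * Real.pi * (x + 1) / 2)
    set e := Real.sin (n * Real.pi * (y + 1) / 2)
    have h3 : |a - b| ≤ 2 * η + |s| * (Real.pi / (2 * N)) := by
      have e1 : a - b = (a - s * c) + (-(b - s * e)) + s * (c - e) := by ring
      rw [e1]
      refine (abs_add_three _ _ _).trans ?_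
      rw [abs_neg, abs_mul]
      have : |s| * |c - e| ≤ |s| * (Real.pi / (2 * N)) := by gcongr
      linarith
    have e2 : (N * (n * Real.pi * (x + 1) / 2) - N * (n * Real.pi * (y + 1) / 2)) / Real.pi
      = N * n / 2 * (x - y) := by field_simp; ring
    rw [e2] at hq
    have h4 : (N * n / 2 * (x - y)) ^ 2 ≤ η + |s| / N := by
      have : |s| * (Real.pi / (2 * N)) ≤ 2 * (|s| / N) := by
        have : |s| * (Real.pi / (2 * N)) = (|s| / N) * (Real.pi / 2) := by field_simp
        rw [this]
        have h0 : 0 ≤ |s| / N := by positivity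
        nlinarith [Real.pi_le_four]
      linarith
    have h5 := Real.abs_le_sqrt h4
    rw [abs_mul, abs_of_pos (by positivity : (0:ℝ) < N * n / 2)] at h5
    rw [div_mul_eq_mul_div, le_div_iff₀ (by positivity)]
    rw [← hR] at h5
    linarith
  calc volume A ≤ volume (⋃ k ∈ Finset.range (2 * N * n), A ∩ J k) := measure_mono hcov
    _ ≤ ∑ k ∈ Finset.range (2 * N * n), volume (A ∩ J k) := measure_biUnion_finset_le _ _
    _ ≤ ∑ k ∈ Finset.range (2 * N * n), ENNReal.ofReal (2 / (N * n) * R) :=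
        Finset.sum_le_sum fun k _ => hpiece k
    _ = ENNReal.ofReal (4 * R) := by
        rw [Finset.sum_const, Finset.card_range, nsmul_eq_mul, ← ENNReal.ofReal_natCast,
          ← ENNReal.ofReal_mul (by positivity)]
        congr 1
        push_cast
        field_simp
        ring

lemma dirichlet (m : ℕ) (ψ : ℝ) :
    Real.sin ψ * (2 * ∑ l ∈ Finset.range m, Real.cos (((l + 1 : ℕ) : ℝ) * (2 * ψ)))
      = Real.sin ((2 * m + 1 : ℕ) * ψ) - Real.sin ψ := by
  induction m with
  | zero => simp
  | succ m ih =>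
    rw [Finset.sum_range_succ, mul_add, mul_add, ih]
    have e1 : ((2 * m + 1 : ℕ) : ℝ) * ψ = ((m + 1 : ℕ) : ℝ) * (2 * ψ) - ψ := by push_cast; ring
    have e2 : ((2 * (m + 1) + 1 : ℕ) : ℝ) * ψ = ((m + 1 : ℕ) : ℝ) * (2 * ψ) + ψ := by
      push_cast; ring
    rw [e1, e2, Real.sin_sub, Real.sin_add]
    ring

/-- sum of cosines over a full set of `n`-th roots of unity -/
lemma sum_cos_grid (n k : ℕ) (hn : 0 < n) (θ : ℝ) :
    ∑ i ∈ Finset.range n, Real.cos (θ - 2 * Real.pi * k * (i + 1) / n)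
      = if n ∣ k then n * Real.cos θ else 0 := by
  have hnR : (n:ℝ) ≠ 0 := by positivity
  split_ifs with h
  · obtain ⟨c, rfl⟩ := h
    have : ∀ i ∈ Finset.range n, Real.cos (θ - 2 * Real.pi * (n * c : ℕ) * (i + 1) / n)
        = Real.cos θ := by
      intro i _
      have e : θ - 2 * Real.pi * (n * c : ℕ) * (i + 1) / n
          = θ - ((c * (i + 1) : ℕ) : ℝ) * (2 * Real.pi) := by
        push_cast; field_simp
      rw [e, Real.cos_sub_nat_mul_two_pi]
    rw [Finset.sum_congr rfl this]
    simp
  · have hs : Real.sin (Real.pi * k / n) ≠ 0 := by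
      intro h0
      rw [Real.sin_eq_zero_iff] at h0
      obtain ⟨z, hz⟩ := h0
      apply h
      have : (z:ℝ) * n = k := by
        have hpi := Real.pi_ne_zero
        field_simp at hz
        linarith
      have h2 : z * n = (k:ℤ) := by exact_mod_cast this
      have : (n:ℤ) ∣ k := ⟨z, by rw [← h2]; ring⟩
      exact_mod_cast this
    have tel : ∀ r : ℕ, 2 * Real.sin (Real.pi * k / n) *
        ∑ i ∈ Finset.range r, Real.cos (θ - 2 * Real.pi * k * (i + 1) / n)
        = Real.sin (θ - Real.pi * k / n) - Real.sin (θ - Real.pi * k / n - 2 * Real.pi * k * r / n) := by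
      intro r
      induction r with
      | zero => simp
      | succ r ih =>
        rw [Finset.sum_range_succ, mul_add, ih]
        have e1 : θ - Real.pi * k / n - 2 * Real.pi * k * r / n
            = (θ - 2 * Real.pi * k * (r + 1) / n) + Real.pi * k / n := by
          field_simp; ring
        have e2 : θ - Real.pi * k / n - 2 * Real.pi * k * ((r + 1 : ℕ) : ℝ) / n
            = (θ - 2 * Real.pi * k * (r + 1) / n) - Real.pi * k / n := by
          push_cast; field_simp; ring
        rw [e1, e2, Real.sin_sub (θ - 2 * Real.pi * k * (r + 1) / n),
          Real.sin_add (θ - 2 * Real.pi * k * (r + 1) / n)]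
        ring
    have := tel n
    have e : θ - Real.pi * k / n - 2 * Real.pi * k * n / n
        = θ - Real.pi * k / n - k * (2 * Real.pi) := by field_simp
    rw [e, Real.sin_sub_nat_mul_two_pi, sub_self] at this
    rcases mul_eq_zero.1 this with h1 | h1
    · exact absurd h1 (by simpa using hs)
    · exact h1

lemma sum_dvd (n m : ℕ) (hn : 0 < n) (F : ℕ → ℝ) :
    ∑ k ∈ Finset.range (n * m), (if n ∣ k + 1 then F (k + 1) else 0)
      = ∑ l ∈ Finset.range m, F ((l + 1) * n) := by
  induction m with
  | zero => simp
  | succ m ih =>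
    rw [Nat.mul_succ, Finset.sum_range_add, ih, Finset.sum_range_succ]
    congr 1
    rw [Finset.sum_eq_single (n - 1)]
    · have : n * m + (n - 1) + 1 = (m + 1) * n := by
        have : n - 1 + 1 = n := by omega
        rw [add_assoc, this]; ring
      rw [this, if_pos (Dvd.intro_left _ rfl)]
    · intro i hi hne
      rw [if_neg]
      intro hd
      rw [add_assoc, Nat.dvd_add_right (Dvd.intro _ rfl)] at hd
      have := Nat.le_of_dvd (by omega) hd
      have := Finset.mem_range.1 hi
      omega
    · intro h
      exact absurd (Finset.mem_range.2 (by omega)) h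

/-- kernel identity -/
lemma kernel_sum (M : ℕ) (L0 LL x y : ℝ) :
    ∑ j : Fin (2 * M + 1), (if j.val = 0 then L0 else LL) *
        (phiF (2 * M + 1) x j * phiF (2 * M + 1) y j)
      = L0 / 2 + LL * ∑ k ∈ Finset.range M, Real.cos (((k + 1 : ℕ) : ℝ) * Real.pi * (x - y)) := by
  let g : ℝ → ℕ → ℝ := fun x j =>
    if j = 0 then 1 / Real.sqrt 2
    else if j % 2 = 1 then Real.sin ((((j + 1) / 2 : ℕ) : ℝ) * Real.pi * x)
    else Real.cos (((j / 2 : ℕ) : ℝ) * Real.pi * x)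
  have h1 : ∑ j : Fin (2 * M + 1), (if j.val = 0 then L0 else LL) *
        (phiF (2 * M + 1) x j * phiF (2 * M + 1) y j)
      = ∑ j : Fin (2 * M + 1), (fun j : ℕ => (if j = 0 then L0 else LL) * (g x j * g y j)) j.val :=
    rfl
  rw [h1, Fin.sum_univ_eq_sum_range (fun j : ℕ => (if j = 0 then L0 else LL) * (g x j * g y j))]
  clear h1
  induction M with
  | zero =>
    simp only [mul_zero, zero_add, Finset.sum_range_one, Finset.range_zero, Finset.sum_empty,
      if_true, g]
    have : (1 / Real.sqrt 2) * (1 / Real.sqrt 2) = 1 / 2 := by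
      rw [div_mul_div_comm, Real.mul_self_sqrt (by norm_num)]; norm_num
    rw [this]; ring
  | succ M ih =>
    have : 2 * (M + 1) + 1 = (2 * M + 1) + 1 + 1 := by ring
    rw [this, Finset.sum_range_succ, Finset.sum_range_succ, ih, Finset.sum_range_succ]
    have a1 : ∀ x, g x (2 * M + 1) = Real.sin (((M + 1 : ℕ) : ℝ) * Real.pi * x) := by
      intro x
      simp only [g]
      rw [if_neg (by omega), if_pos (by omega)]
      congr 4
      omega
    have a2 : ∀ x, g x (2 * M + 1 + 1) = Real.cos (((M + 1 : ℕ) : ℝ) * Real.pi * x) := by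
      intro x
      simp only [g]
      rw [if_neg (by omega), if_neg (by omega)]
      congr 4
      omega
    rw [a1, a1, a2, a2, if_neg (by omega), if_neg (by omega), mul_sub, Real.cos_sub]
    ring

/-- summed kernel over the grid -/
lemma kernel_grid (n m : ℕ) (hn : 0 < n) (L0 LL x : ℝ) :
    ∑ i : Fin n, ∑ j : Fin (2 * (n * m) + 1), (if j.val = 0 then L0 else LL) *
        (phiF (2 * (n * m) + 1) x j * phiF (2 * (n * m) + 1) (xtr n i) j)
      = n * (L0 / 2 + LL * ∑ l ∈ Finset.range m,
          Real.cos (((l + 1 : ℕ) : ℝ) * (n * Real.pi * (x + 1)))) := by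
  simp_rw [kernel_sum]
  rw [Finset.sum_add_distrib, ← Finset.mul_sum, Finset.sum_comm]
  have h1 : ∀ k : ℕ, ∑ i : Fin n, Real.cos (((k + 1 : ℕ) : ℝ) * Real.pi * (x - xtr n i))
      = if n ∣ k + 1 then n * Real.cos (((k + 1 : ℕ) : ℝ) * (Real.pi * (x + 1))) else 0 := by
    intro k
    rw [← sum_cos_grid n (k + 1) hn, ← Fin.sum_univ_eq_sum_range
      (fun i : ℕ => Real.cos (((k + 1 : ℕ) : ℝ) * (Real.pi * (x + 1))
        - 2 * Real.pi * (k + 1 : ℕ) * (i + 1) / n))]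
    refine Finset.sum_congr rfl fun i _ => ?_
    congr 1
    unfold xtr
    have : (n:ℝ) ≠ 0 := by positivity
    field_simp
    ring
  rw [Finset.sum_congr rfl fun k _ => h1 k,
    sum_dvd n m hn (fun k => n * Real.cos ((k : ℝ) * (Real.pi * (x + 1)))), ← Finset.mul_sum]
  simp only [Finset.sum_const, Finset.card_univ, Fintype.card_fin, nsmul_eq_mul]
  have : ∀ l : ℕ, (((l + 1) * n : ℕ) : ℝ) * (Real.pi * (x + 1))
    = ((l + 1 : ℕ) : ℝ) * (n * Real.pi * (x + 1)) := by intro l; push_cast; ring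
  simp_rw [this]
  ring

lemma weighted_cs {ι : Type*} [Fintype ι] (lam u v : ι → ℝ) (hlam : ∀ j, 0 < lam j) :
    (∑ j, u j * v j) ^ 2 ≤ (∑ j, u j ^ 2 / lam j) * ∑ j, lam j * v j ^ 2 := by
  have h := Finset.sum_mul_sq_le_sq_mul_sq Finset.univ
    (fun j => u j / Real.sqrt (lam j)) (fun j => Real.sqrt (lam j) * v j)
  have e1 : ∀ j, u j / Real.sqrt (lam j) * (Real.sqrt (lam j) * v j) = u j * v j := by
    intro j
    have : Real.sqrt (lam j) ≠ 0 := (Real.sqrt_pos.2 (hlam j)).ne'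
    field_simp
  have e2 : ∀ j, (u j / Real.sqrt (lam j)) ^ 2 = u j ^ 2 / lam j := by
    intro j; rw [div_pow, Real.sq_sqrt (hlam j).le]
  have e3 : ∀ j, (Real.sqrt (lam j) * v j) ^ 2 = lam j * v j ^ 2 := by
    intro j; rw [mul_pow, Real.sq_sqrt (hlam j).le]
  simpa only [e1, e2, e3] using h

/-- the sample covariance is `ρ`-relatively close to `diag lam` -/
def CovClose (B d : ℕ) (lam : Fin B → ℝ) (W : Fin d → Fin B → ℝ) (ρ : ℝ) : Prop :=
  ∀ v : Fin B → ℝ, |(∑ i, (∑ j, W i j * v j) ^ 2) - d * ∑ j, lam j * v j ^ 2|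
    ≤ ρ * (d * ∑ j, lam j * v j ^ 2)

lemma exists_preimage {B d : ℕ} (hd : 0 < d) (lam : Fin B → ℝ) (hlam : ∀ j, 0 < lam j)
    (W : Fin d → Fin B → ℝ) (ρ : ℝ) (hρ1 : ρ < 1) (H : CovClose B d lam W ρ)
    (α : Fin B → ℝ) :
    ∃ β : Fin d → ℝ, (∀ j, ∑ i, β i * W i j = α j) ∧
      (1 - ρ) * (d * ∑ i, β i ^ 2) ≤ ∑ j, α j ^ 2 / lam j := by
  have hdR : (0:ℝ) < d := by exact_mod_cast hd
  let G : (Fin B → ℝ) →ₗ[ℝ] (Fin B → ℝ) :=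
    { toFun := fun v j => ∑ i, (∑ k, W i k * v k) * W i j
      map_add' := by
        intro u v; ext j
        simp only [Pi.add_apply, mul_add, Finset.sum_add_distrib, add_mul]
      map_smul' := by
        intro c v; ext j
        simp only [Pi.smul_apply, smul_eq_mul, RingHom.id_apply, Finset.mul_sum, Finset.sum_mul]
        refine Finset.sum_congr rfl fun i _ => Finset.sum_congr rfl fun k _ => by ring }
  have hG : ∀ v : Fin B → ℝ, ∑ j, v j * G v j = ∑ i, (∑ k, W i k * v k) ^ 2 := by
    intro v
    change ∑ j, v j * ∑ i, (∑ k, W i k * v k) * W i j = _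
    simp_rw [Finset.mul_sum]
    rw [Finset.sum_comm]
    refine Finset.sum_congr rfl fun i _ => ?_
    rw [sq, Finset.mul_sum]
    refine Finset.sum_congr rfl fun k _ => by ring
  have hlow : ∀ v : Fin B → ℝ, (1 - ρ) * (d * ∑ j, lam j * v j ^ 2) ≤ ∑ j, v j * G v j := by
    intro v
    rw [hG]
    have := (abs_le.1 (H v)).1
    linarith
  have hinj : Function.Injective G := by
    rw [injective_iff_map_eq_zero]
    intro v hv
    have h1 := hlow v
    rw [hv] at h1
    simp only [Pi.zero_apply, mul_zero, Finset.sum_const_zero] at h1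
    have h2 : ∀ j ∈ Finset.univ, 0 ≤ lam j * v j ^ 2 := fun j _ =>
      mul_nonneg (hlam j).le (sq_nonneg _)
    have h3 : ∑ j, lam j * v j ^ 2 ≤ 0 := by
      by_contra h
      push Not at h
      have : 0 < (1 - ρ) * (d * ∑ j, lam j * v j ^ 2) := by
        have : 0 < 1 - ρ := by linarith
        positivity
      linarith
    have h4 := (Finset.sum_eq_zero_iff_of_nonneg h2).1 (le_antisymm h3 (Finset.sum_nonneg h2))
    ext j
    have h5 := h4 j (Finset.mem_univ j)
    rcases mul_eq_zero.1 h5 with h6 | h6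
    · exact absurd h6 (hlam j).ne'
    · simpa using h6
  obtain ⟨v, hv⟩ := LinearMap.surjective_of_injective hinj α
  refine ⟨fun i => ∑ k, W i k * v k, fun j => congrFun hv j, ?_⟩
  have h1 := hlow v
  have hcs := weighted_cs lam α v hlam
  have hG' := hG v
  rw [hv] at h1 hG'
  rw [← hG']
  set t := ∑ j, v j * α j with ht
  have e : ∑ j, α j * v j = t := Finset.sum_congr rfl fun j _ => mul_comm _ _
  rw [e] at hcs
  have ht0 : 0 ≤ t := by rw [hG']; positivity
  set q := ∑ j, α j ^ 2 / lam j
  have hq0 : 0 ≤ q := Finset.sum_nonneg fun j _ => div_nonneg (sq_nonneg _) (hlam j).le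
  rcases eq_or_lt_of_le ht0 with h | h
  · rw [← h]; simpa using hq0
  · have h1ρ : 0 < 1 - ρ := by linarith
    have h6 : (1 - ρ) * d * t ^ 2 ≤ q * t := by
      calc (1 - ρ) * d * t ^ 2 ≤ (1 - ρ) * d * (q * ∑ j, lam j * v j ^ 2) := by gcongr
        _ = q * ((1 - ρ) * (d * ∑ j, lam j * v j ^ 2)) := by ring
        _ ≤ q * t := by gcongr
    have : ((1 - ρ) * (d * t)) * t ≤ q * t := by linarith
    exact le_of_mul_le_mul_right this h

lemma pushforward_bound {B d : ℕ} (lam : Fin B → ℝ) (hlam : ∀ j, 0 < lam j)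
    (W : Fin d → Fin B → ℝ) (ρ : ℝ) (hρ0 : 0 ≤ ρ) (H : CovClose B d lam W ρ)
    (β : Fin d → ℝ) :
    ∑ j, (∑ i, β i * W i j) ^ 2 / lam j ≤ (1 + ρ) * (d * ∑ i, β i ^ 2) := by
  set u : Fin B → ℝ := fun j => ∑ i, β i * W i j with hu
  set q := ∑ j, u j ^ 2 / lam j with hq
  have hq0 : 0 ≤ q := Finset.sum_nonneg fun j _ => div_nonneg (sq_nonneg _) (hlam j).le
  let w : Fin B → ℝ := fun j => u j / lam j
  have e1 : q = ∑ i, β i * ∑ j, W i j * w j := by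
    rw [hq]
    simp_rw [Finset.mul_sum]
    rw [Finset.sum_comm]
    refine Finset.sum_congr rfl fun j _ => ?_
    have : u j ^ 2 / lam j = u j * w j := by simp only [w]; ring
    rw [this]
    simp only [hu, Finset.sum_mul]
    refine Finset.sum_congr rfl fun i _ => by ring
  have e2 : ∑ j, lam j * w j ^ 2 = q := by
    refine Finset.sum_congr rfl fun j _ => ?_
    have := (hlam j).ne'
    simp only [w]
    field_simp
  have hcs := Finset.sum_mul_sq_le_sq_mul_sq Finset.univ β (fun i => ∑ j, W i j * w j)
  rw [← e1] at hcs
  have h2 := (abs_le.1 (H w)).2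
  rw [e2] at h2
  have hb : 0 ≤ ∑ i, β i ^ 2 := by positivity
  have h3 : q * q ≤ ((1 + ρ) * (d * ∑ i, β i ^ 2)) * q := by
    calc q * q = q ^ 2 := by ring
      _ ≤ (∑ i, β i ^ 2) * (∑ i, (∑ j, W i j * w j) ^ 2) := hcs
      _ ≤ (∑ i, β i ^ 2) * ((1 + ρ) * (d * q)) := by
          apply mul_le_mul_of_nonneg_left _ hb
          linarith
      _ = _ := by ring
  rcases eq_or_lt_of_le hq0 with h | h
  · rw [← h]; positivity
  · exact le_of_mul_le_mul_right h3 h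

lemma rfsFun_eq {B d : ℕ} (W : Fin d → Fin B → ℝ) (β : Fin d → ℝ) (x : ℝ) :
    rfsFun B d W β x = ∑ j, (∑ i, β i * W i j) * phiF B x j := by
  unfold rfsFun
  simp_rw [Finset.mul_sum, Finset.sum_mul]
  rw [Finset.sum_comm]
  refine Finset.sum_congr rfl fun j _ => Finset.sum_congr rfl fun i _ => by ring

/-- the explicit Fourier interpolator -/
lemma fourier_explicit (n m B : ℕ) (hn : 0 < n) (L0 LL : ℝ) (hL0 : 0 < L0) (hLL : 0 < LL)
    (hB : B = 2 * (n * m) + 1) (lam : Fin B → ℝ)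
    (hlam : ∀ j : Fin B, lam j = if j.val = 0 then L0 else LL)
    (α : Fin B → ℝ) (hα : IsMinInterp n B lam α) :
    (∀ x, ∑ j, α j * phiF B x j = (L0 / 2 + LL * ∑ l ∈ Finset.range m,
          Real.cos (((l + 1 : ℕ) : ℝ) * (n * Real.pi * (x + 1)))) / (L0 / 2 + LL * m)) ∧
    (∀ u, Interpolates n B u → ∑ j, (u j - α j) ^ 2 / lam j
        = ∑ j, u j ^ 2 / lam j - ∑ j, α j ^ 2 / lam j) ∧
    ∑ j, α j ^ 2 / lam j = 1 / (L0 / 2 + LL * m) := by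
  subst hB
  have hnR : (0:ℝ) < n := by exact_mod_cast hn
  have hpos : ∀ j, 0 < lam j := by intro j; rw [hlam]; split_ifs <;> assumption
  set E := L0 / 2 + LL * m with hE
  have hE0 : 0 < E := by positivity
  let a : Fin (2 * (n * m) + 1) → ℝ := fun j =>
    lam j * (∑ i, phiF (2 * (n * m) + 1) (xtr n i) j) / (n * E)
  have hfun : ∀ x, ∑ j, a j * phiF (2 * (n * m) + 1) x j
      = (L0 / 2 + LL * ∑ l ∈ Finset.range m,
          Real.cos (((l + 1 : ℕ) : ℝ) * (n * Real.pi * (x + 1)))) / E := by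
    intro x
    have h := kernel_grid n m hn L0 LL x
    have e : ∑ j, a j * phiF (2 * (n * m) + 1) x j = (∑ i : Fin n, ∑ j : Fin (2 * (n * m) + 1),
        (if j.val = 0 then L0 else LL) *
        (phiF (2 * (n * m) + 1) x j * phiF (2 * (n * m) + 1) (xtr n i) j)) / (n * E) := by
      rw [Finset.sum_comm, Finset.sum_div]
      refine Finset.sum_congr rfl fun j _ => ?_
      simp only [a]
      rw [← hlam, ← Finset.mul_sum, ← Finset.mul_sum]
      ring
    rw [e, h, mul_div_mul_left _ _ hnR.ne']
  have haint : Interpolates n (2 * (n * m) + 1) a := by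
    intro i
    rw [hfun]
    have : ∀ l ∈ Finset.range m,
        Real.cos (((l + 1 : ℕ) : ℝ) * (n * Real.pi * (xtr n i + 1))) = 1 := by
      intro l _
      have e : ((l + 1 : ℕ) : ℝ) * (n * Real.pi * (xtr n i + 1))
          = (((l + 1) * (i.val + 1) : ℕ) : ℝ) * (2 * Real.pi) := by
        unfold xtr
        push_cast
        field_simp
        ring
      rw [e, Real.cos_nat_mul_two_pi]
    rw [Finset.sum_congr rfl this]
    simp only [Finset.sum_const, Finset.card_range, nsmul_eq_mul, mul_one]
    exact div_self hE0.ne'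
  have hinner : ∀ u, Interpolates n (2 * (n * m) + 1) u → ∑ j, u j * a j / lam j = 1 / E := by
    intro u hu
    have e : ∀ j, u j * a j / lam j
        = (∑ i, u j * phiF (2 * (n * m) + 1) (xtr n i) j) / (n * E) := by
      intro j
      have := (hpos j).ne'
      simp only [a]
      rw [← Finset.mul_sum]
      field_simp
    simp_rw [e]
    rw [← Finset.sum_div, Finset.sum_comm, Finset.sum_congr rfl fun i _ => hu i]
    simp only [Finset.sum_const, Finset.card_univ, Fintype.card_fin, nsmul_eq_mul]
    field_simp
  have hQa : ∑ j, a j ^ 2 / lam j = 1 / E := by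
    rw [← hinner a haint]
    refine Finset.sum_congr rfl fun j _ => by ring
  have hpyth : ∀ u, Interpolates n (2 * (n * m) + 1) u → ∑ j, (u j - a j) ^ 2 / lam j
        = ∑ j, u j ^ 2 / lam j - ∑ j, a j ^ 2 / lam j := by
    intro u hu
    have e : ∀ j, (u j - a j) ^ 2 / lam j
      = u j ^ 2 / lam j - 2 * (u j * a j / lam j) + a j ^ 2 / lam j := by intro j; ring
    simp_rw [e]
    rw [Finset.sum_add_distrib, Finset.sum_sub_distrib, ← Finset.mul_sum, hinner u hu, hQa]
    ring
  have hαa : α = a := by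
    have h1 := hpyth α hα.1
    have h2 := hα.2 a haint
    have h3 : ∀ j ∈ Finset.univ, 0 ≤ (α j - a j) ^ 2 / lam j := fun j _ =>
      div_nonneg (sq_nonneg _) (hpos j).le
    have h4 := (Finset.sum_eq_zero_iff_of_nonneg h3).1
      (le_antisymm (by linarith) (Finset.sum_nonneg h3))
    ext j
    have h5 := h4 j (Finset.mem_univ j)
    rcases div_eq_zero_iff.1 h5 with h6 | h6
    · have := pow_eq_zero_iff (two_ne_zero) |>.1 h6
      linarith
    · exact absurd h6 (hpos j).ne'
  rw [hαa]
  exact ⟨hfun, hpyth, hQa⟩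

/-- sup-norm closeness of the two interpolators -/
lemma sup_close (n m B d : ℕ) (hn : 0 < n) (hd : 0 < d) (L0 LL : ℝ) (hL0 : 0 < L0)
    (hLL : 0 < LL)
    (hB : B = 2 * (n * m) + 1) (lam : Fin B → ℝ)
    (hlam : ∀ j : Fin B, lam j = if j.val = 0 then L0 else LL)
    (α : Fin B → ℝ) (hα : IsMinInterp n B lam α)
    (W : Fin d → Fin B → ℝ) (ρ : ℝ) (hρ0 : 0 ≤ ρ) (hρ1 : ρ ≤ 1 / 2) (H : CovClose B d lam W ρ)
    (βh : Fin d → ℝ)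
    (hβ : (∃ β, RFSInterpolates n B d W β) →
        RFSInterpolates n B d W βh ∧
        ∀ β : Fin d → ℝ, RFSInterpolates n B d W β → ∑ i, (βh i) ^ 2 ≤ ∑ i, (β i) ^ 2) (x : ℝ) :
    |rfsFun B d W βh x - ∑ j, α j * phiF B x j| ≤ Real.sqrt (4 * ρ * n) := by
  have hpos : ∀ j, 0 < lam j := by intro j; rw [hlam]; split_ifs <;> assumption
  have hnR : (1:ℝ) ≤ n := by exact_mod_cast hn
  obtain ⟨_, hpyth, hQ⟩ := fourier_explicit n m B hn L0 LL hL0 hLL hB lam hlam α hα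
  obtain ⟨β0, hβ0, hβ0n⟩ := exists_preimage hd lam hpos W ρ (by linarith) H α
  have hβ0i : RFSInterpolates n B d W β0 := by
    intro i
    rw [rfsFun_eq]
    simp_rw [hβ0]
    exact hα.1 i
  obtain ⟨hIntg, hmin⟩ := hβ ⟨β0, hβ0i⟩
  have hmin0 := hmin β0 hβ0i
  have hpush := pushforward_bound lam hpos W ρ hρ0 H βh
  set u : Fin B → ℝ := fun j => ∑ i, βh i * W i j with hu
  have hui : Interpolates n B u := by
    intro i
    have := hIntg i
    rwa [rfsFun_eq] at this
  have hp := hpyth u hui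
  have hE0 : 0 < L0 / 2 + LL * m := by positivity
  set E := L0 / 2 + LL * m with hE
  set b := (d:ℝ) * ∑ i, β0 i ^ 2 with hb
  have hb0 : 0 ≤ b := by positivity
  have hq1 : ∑ j, u j ^ 2 / lam j ≤ (1 + ρ) * b := by
    refine hpush.trans ?_
    rw [hb]
    gcongr
  rw [hQ] at hβ0n hp
  have hdiff : ∑ j, (u j - α j) ^ 2 / lam j ≤ 4 * ρ * (1 / E) := by
    rw [hp]
    have hb2 : b ≤ 2 * (1 / E) := by nlinarith
    have hb3 : ρ * b ≤ ρ * (2 * (1 / E)) := mul_le_mul_of_nonneg_left hb2 hρ0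
    linarith
  have e : rfsFun B d W βh x - ∑ j, α j * phiF B x j = ∑ j, (u j - α j) * phiF B x j := by
    rw [rfsFun_eq, ← Finset.sum_sub_distrib]
    refine Finset.sum_congr rfl fun j _ => by simp only [hu]; ring
  rw [e]
  apply Real.abs_le_sqrt
  refine (weighted_cs lam (fun j => u j - α j) (phiF B x) hpos).trans ?_
  have hK : ∑ j, lam j * phiF B x j ^ 2 = L0 / 2 + LL * (n * m) := by
    subst hB
    have := kernel_sum (n * m) L0 LL x x
    simp only [sub_self, mul_zero, Real.cos_zero, Finset.sum_const, Finset.card_range,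
      nsmul_eq_mul, mul_one] at this
    push_cast at this
    rw [← this]
    refine Finset.sum_congr rfl fun j _ => by rw [hlam, sq]
  rw [hK]
  have hKE : L0 / 2 + LL * (n * m) ≤ n * E := by
    rw [hE]
    nlinarith
  calc (∑ j, (u j - α j) ^ 2 / lam j) * (L0 / 2 + LL * (n * m))
      ≤ (4 * ρ * (1 / E)) * (n * E) := by
        apply mul_le_mul hdiff hKE (by positivity) (by positivity)
    _ = 4 * ρ * n := by field_simp

lemma classRisk_close (f g : ℝ → ℝ) (ε : ℝ) (h : ∀ x, |g x - f x| ≤ ε) (V : ℝ) (hV : 0 ≤ V)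
    (hv : volume {x ∈ Set.Icc (-1 : ℝ) 1 | |f x| ≤ ε} ≤ ENNReal.ofReal V) :
    |classRisk g - classRisk f| ≤ V / 2 := by
  have fin : ∀ g : ℝ → ℝ, volume {x ∈ Set.Icc (-1 : ℝ) 1 | g x ≤ 0} ≠ ⊤ := by
    intro g
    refine ne_top_of_le_ne_top ?_ (measure_mono (t := Set.Icc (-1:ℝ) 1) fun x hx => hx.1)
    simp
  have key : ∀ a b : ℝ → ℝ, {x ∈ Set.Icc (-1 : ℝ) 1 | a x ≤ 0} ⊆
      {x ∈ Set.Icc (-1 : ℝ) 1 | b x ≤ 0} ∪ {x ∈ Set.Icc (-1 : ℝ) 1 | |f x| ≤ ε} →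
      (volume {x ∈ Set.Icc (-1 : ℝ) 1 | a x ≤ 0}).toReal ≤
        (volume {x ∈ Set.Icc (-1 : ℝ) 1 | b x ≤ 0}).toReal + V := by
    intro a b hab
    have h1 := (measure_mono hab).trans (measure_union_le (μ := volume) _ _)
    have h2 := h1.trans (add_le_add_right hv _)
    have h3 := ENNReal.toReal_mono (by finiteness [fin b]) h2
    rwa [ENNReal.toReal_add (fin b) (by simp), ENNReal.toReal_ofReal hV] at h3
  have k1 := key g f (by
    rintro x ⟨hx, hgx⟩
    have := abs_le.1 (h x)
    by_cases hf : f x ≤ 0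
    · exact Or.inl ⟨hx, hf⟩
    · refine Or.inr ⟨hx, abs_le.2 ⟨by linarith, by linarith⟩⟩)
  have k2 := key f g (by
    rintro x ⟨hx, hgx⟩
    have := abs_le.1 (h x)
    by_cases hf : g x ≤ 0
    · exact Or.inl ⟨hx, hf⟩
    · refine Or.inr ⟨hx, abs_le.2 ⟨by linarith, by linarith⟩⟩)
  unfold classRisk
  rw [abs_le]
  constructor <;> linarith

/-- deterministic conclusion -/
lemma risk_close (n m B d : ℕ) (hn : 0 < n) (hd : 0 < d) (L0 LL : ℝ) (hL0 : 0 < L0)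
    (hLL : 0 < LL)
    (hB : B = 2 * (n * m) + 1) (lam : Fin B → ℝ)
    (hlam : ∀ j : Fin B, lam j = if j.val = 0 then L0 else LL)
    (α : Fin B → ℝ) (hα : IsMinInterp n B lam α)
    (W : Fin d → Fin B → ℝ) (ρ : ℝ) (hρ0 : 0 ≤ ρ) (hρ1 : ρ ≤ 1 / 2) (H : CovClose B d lam W ρ)
    (βh : Fin d → ℝ)
    (hβ : (∃ β, RFSInterpolates n B d W β) →
        RFSInterpolates n B d W βh ∧
        ∀ β : Fin d → ℝ, RFSInterpolates n B d W β → ∑ i, (βh i) ^ 2 ≤ ∑ i, (β i) ^ 2)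
    (a : ℝ) (ha : a = L0 / (2 * LL)) :
    |classRisk (rfsFun B d W βh) - classRisk (fun x => ∑ j, α j * phiF B x j)|
      ≤ 2 * Real.sqrt (2 * Real.sqrt (4 * ρ * n) * (a + m) + |1 - 2 * a| / (2 * m + 1 : ℕ)) := by
  have hsup := sup_close n m B d hn hd L0 LL hL0 hLL hB lam hlam α hα W ρ hρ0 hρ1 H βh hβ
  obtain ⟨hf, _, _⟩ := fourier_explicit n m B hn L0 LL hL0 hLL hB lam hlam α hα
  set ε := Real.sqrt (4 * ρ * n)
  have ha0 : 0 < a := by rw [ha]; positivity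
  have hanti := anticonc n (2 * m + 1) hn (by omega) (1 - 2 * a) (2 * ε * (a + m))
  have := classRisk_close (fun x => ∑ j, α j * phiF B x j) (rfsFun B d W βh) ε hsup _
    (by positivity) (le_trans (measure_mono ?_) hanti)
  · linarith
  · rintro x ⟨hx, hfx⟩
    refine ⟨hx, ?_⟩
    have hD := dirichlet m (n * Real.pi * (x + 1) / 2)
    have e0 : 2 * (n * Real.pi * (x + 1) / 2) = n * Real.pi * (x + 1) := by ring
    rw [e0] at hD
    have hfx' := hf x
    set F := ∑ j, α j * phiF B x j
    set S := ∑ l ∈ Finset.range m, Real.cos (((l + 1 : ℕ) : ℝ) * (n * Real.pi * (x + 1)))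
    set ψ := n * Real.pi * (x + 1) / 2
    have e1 : F * (a + m) = a + S := by
      rw [hfx', ha]
      have : L0 + LL * m * 2 ≠ 0 := by positivity
      field_simp
    have e2 : Real.sin ((2 * m + 1 : ℕ) * ψ) - (1 - 2 * a) * Real.sin ψ
        = 2 * F * (a + m) * Real.sin ψ := by
      have : Real.sin ((2 * m + 1 : ℕ) * ψ) = Real.sin ψ + Real.sin ψ * (2 * S) := by
        rw [hD]; ring
      rw [this]
      have : 2 * F * (a + m) = 2 * (a + S) := by rw [← e1]; ring
      rw [this]; ring
    rw [e2, abs_mul, abs_mul, abs_mul, abs_of_pos (by norm_num : (0:ℝ) < 2),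
      abs_of_pos (by positivity : 0 < a + m)]
    have h1 := Real.abs_sin_le_one ψ
    have h2 : 0 ≤ 2 * |F| * (a + m) := by positivity
    calc 2 * |F| * (a + m) * |Real.sin ψ| ≤ 2 * |F| * (a + m) * 1 := by gcongr
      _ ≤ 2 * ε * (a + m) := by rw [mul_one]; gcongr

/-- fourth moment of a standard Gaussian -/
noncomputable def gaussC4 : ℝ := ∫ x, x ^ 4 ∂(gaussianReal 0 1)

lemma gaussC4_nonneg : 0 ≤ gaussC4 := by
  unfold gaussC4
  exact integral_nonneg fun x => by positivity

lemma gauss_fourth (v : ℝ) (hv : 0 < v) :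
    ∫ x, x ^ 4 ∂(gaussianReal 0 v.toNNReal) = v ^ 2 * gaussC4 := by
  have h : (gaussianReal 0 1).map (Real.sqrt v * ·) = gaussianReal 0 v.toNNReal := by
    rw [gaussianReal_map_const_mul]
    congr 1
    · simp
    · ext
      simp [Real.sq_sqrt hv.le, hv.le]
  rw [← h, integral_map (by fun_prop) (by fun_prop)]
  unfold gaussC4
  rw [← integral_const_mul]
  congr 1
  ext x
  rw [mul_pow]
  congr 1
  have : Real.sqrt v ^ 4 = (Real.sqrt v ^ 2) ^ 2 := by ring
  rw [this, Real.sq_sqrt hv.le]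

lemma gauss_second (v : ℝ) (hv : 0 < v) :
    ∫ x, x * x ∂(gaussianReal 0 v.toNNReal) = v := by
  have h := variance_fun_id_gaussianReal (μ := 0) (v := v.toNNReal)
  rw [variance_eq_integral (by fun_prop), integral_id_gaussianReal] at h
  rw [Real.coe_toNNReal _ hv.le] at h
  refine Eq.trans ?_ h
  congr 1
  ext x
  ring

section prob
variable {B : ℕ} (lam : Fin B → ℝ)

/-- law of one Gaussian row -/
noncomputable def rowLaw : Measure (Fin B → ℝ) :=
  Measure.pi fun j : Fin B => gaussianReal 0 (lam j).toNNReal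

instance : IsProbabilityMeasure (rowLaw lam) := by unfold rowLaw; infer_instance

lemma row_memLp4 (j : Fin B) : MemLp (fun z : Fin B → ℝ => z j) 4 (rowLaw lam) := by
  have h := (memLp_id_gaussianReal' (μ := 0) (v := (lam j).toNNReal) 4 (by simp))
  exact h.comp_measurePreserving
    (measurePreserving_eval (fun j : Fin B => gaussianReal 0 (lam j).toNNReal) j)

lemma row_memLp2 (j k : Fin B) : MemLp (fun z : Fin B → ℝ => z j * z k) 2 (rowLaw lam) := by
  have : ENNReal.HolderTriple 4 4 2 := ⟨by
    rw [← two_mul, show (4 : ENNReal) = 2 * 2 by norm_num,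
      ENNReal.mul_inv (by simp) (by simp), ← mul_assoc,
      ENNReal.mul_inv_cancel (by simp) (by simp), one_mul]⟩
  exact (row_memLp4 lam k).mul (row_memLp4 lam j)

lemma row_integral_eval (j : Fin B) (f : ℝ → ℝ) (hf : Measurable f) :
    ∫ z, f (z j) ∂(rowLaw lam) = ∫ x, f x ∂(gaussianReal 0 (lam j).toNNReal) := by
  have h := measurePreserving_eval (fun j : Fin B => gaussianReal 0 (lam j).toNNReal) j
  rw [← h.map_eq, integral_map (measurable_pi_apply j).aemeasurable hf.aestronglyMeasurable]
  rfl

lemma row_mean (hlam : ∀ j, 0 < lam j) (j k : Fin B) :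
    ∫ z, z j * z k ∂(rowLaw lam) = if j = k then lam j else 0 := by
  split_ifs with h
  · subst h
    rw [row_integral_eval lam j (fun x => x * x) (by fun_prop), gauss_second _ (hlam j)]
  · have hind : iIndepFun (fun (i : Fin B) (ω : Fin B → ℝ) => id (ω i)) (rowLaw lam) :=
      iIndepFun_pi (μ := fun j : Fin B => gaussianReal 0 (lam j).toNNReal)
        (X := fun _ => id) (fun i => aemeasurable_id)
    have h2 := (hind.indepFun h).integral_fun_mul_eq_mul_integral
      (measurable_pi_apply j).aestronglyMeasurable (measurable_pi_apply k).aestronglyMeasurable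
    simp only [id] at h2
    rw [h2, row_integral_eval lam j (fun x => x) (by fun_prop), integral_id_gaussianReal, zero_mul]

lemma row_var (hlam : ∀ j, 0 < lam j) (j k : Fin B) :
    variance (fun z : Fin B → ℝ => z j * z k) (rowLaw lam) ≤ gaussC4 * (lam j * lam k) := by
  have hj := hlam j
  have hk := hlam k
  refine (variance_le_expectation_sq (by fun_prop)).trans ?_
  have hIntg : ∀ j, Integrable (fun z : Fin B → ℝ => z j ^ 4) (rowLaw lam) := by
    intro j
    have := (row_memLp2 lam j j).integrable_sq
    refine this.congr (ae_of_all _ fun z => ?_)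
    simp only
    ring
  have h4 : ∀ j, ∫ z, z j ^ 4 ∂(rowLaw lam) = lam j ^ 2 * gaussC4 := by
    intro j
    rw [row_integral_eval lam j (fun x => x ^ 4) (by fun_prop), gauss_fourth _ (hlam j)]
  calc ∫ z, ((fun z : Fin B → ℝ => z j * z k) ^ 2) z ∂(rowLaw lam)
      ≤ ∫ z, (lam k / (2 * lam j) * z j ^ 4 + lam j / (2 * lam k) * z k ^ 4) ∂(rowLaw lam) := by
        refine integral_mono (row_memLp2 lam j k).integrable_sq
          (((hIntg j).const_mul _).add ((hIntg k).const_mul _)) fun z => ?_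
        simp only [Pi.pow_apply]
        have e : lam k / (2 * lam j) * z j ^ 4 + lam j / (2 * lam k) * z k ^ 4 - (z j * z k) ^ 2
          = (lam k * z j ^ 2 - lam j * z k ^ 2) ^ 2 / (2 * lam j * lam k) := by
          field_simp; ring
        have : 0 ≤ (lam k * z j ^ 2 - lam j * z k ^ 2) ^ 2 / (2 * lam j * lam k) := by positivity
        linarith
    _ = gaussC4 * (lam j * lam k) := by
        rw [integral_add ((hIntg j).const_mul _) ((hIntg k).const_mul _), integral_const_mul,
          integral_const_mul, h4, h4]
        field_simp
        ring

/-- law of the whole weight matrix -/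
noncomputable def matLaw (d : ℕ) : Measure (Fin d → Fin B → ℝ) :=
  Measure.pi fun _ : Fin d => rowLaw lam

instance (d : ℕ) : IsProbabilityMeasure (matLaw lam d) := by unfold matLaw; infer_instance

lemma mat_memLp (d : ℕ) (j k : Fin B) :
    MemLp (fun W : Fin d → Fin B → ℝ => ∑ i, W i j * W i k) 2 (matLaw lam d) := by
  refine memLp_finsetSum _ fun i _ => ?_
  exact (row_memLp2 lam j k).comp_measurePreserving
    (measurePreserving_eval (fun _ : Fin d => rowLaw lam) i)

lemma mat_mean (hlam : ∀ j, 0 < lam j) (d : ℕ) (j k : Fin B) :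
    ∫ W, (∑ i, W i j * W i k) ∂(matLaw lam d) = d * if j = k then lam j else 0 := by
  rw [integral_finsetSum]
  · have : ∀ i : Fin d, ∫ W : Fin d → Fin B → ℝ, W i j * W i k ∂(matLaw lam d)
        = if j = k then lam j else 0 := by
      intro i
      rw [← row_mean lam hlam j k]
      have h := measurePreserving_eval (fun _ : Fin d => rowLaw lam) i
      conv_rhs => rw [← h.map_eq]
      rw [integral_map (measurable_pi_apply i).aemeasurable (by fun_prop)]
      rfl
    rw [Finset.sum_congr rfl fun i _ => this i]
    simp
  · intro i _
    exact ((row_memLp2 lam j k).comp_measurePreserving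
      (measurePreserving_eval (fun _ : Fin d => rowLaw lam) i)).integrable (by norm_num)

lemma mat_var (hlam : ∀ j, 0 < lam j) (d : ℕ) (j k : Fin B) :
    ∫ W, ((∑ i, W i j * W i k) - d * if j = k then lam j else 0) ^ 2 ∂(matLaw lam d)
      ≤ d * (gaussC4 * (lam j * lam k)) := by
  have h1 := variance_eq_integral (mat_memLp lam d j k).aestronglyMeasurable.aemeasurable
  rw [mat_mean lam hlam] at h1
  rw [← h1]
  have h2 := variance_sum_pi (μ := fun _ : Fin d => rowLaw lam)
    (X := fun _ z => z j * z k) (fun _ => row_memLp2 lam j k)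
  have e : (∑ i : Fin d, fun ω : Fin d → Fin B → ℝ => ω i j * ω i k)
      = fun W => ∑ i, W i j * W i k := by
    ext W; simp
  rw [e] at h2
  change variance _ (Measure.pi fun _ : Fin d => rowLaw lam) ≤ _
  rw [h2]
  simp only [Finset.sum_const, Finset.card_univ, Fintype.card_fin, nsmul_eq_mul]
  gcongr
  exact row_var lam hlam j k

/-- normalised Frobenius error -/
noncomputable def frobErr (d : ℕ) (W : Fin d → Fin B → ℝ) : ℝ :=
  ∑ r : Fin B × Fin B,
    ((∑ i, W i r.1 * W i r.2) - d * if r.1 = r.2 then lam r.1 else 0) ^ 2 / (lam r.1 * lam r.2)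

lemma covClose_of_frob (hlam : ∀ j, 0 < lam j) (d : ℕ) (W : Fin d → Fin B → ℝ) (ρ : ℝ)
    (hρ : 0 ≤ ρ) (h : frobErr lam d W ≤ (ρ * d) ^ 2) : CovClose B d lam W ρ := by
  intro v
  have hcs := weighted_cs (fun r : Fin B × Fin B => lam r.1 * lam r.2)
    (fun r => (∑ i, W i r.1 * W i r.2) - d * if r.1 = r.2 then lam r.1 else 0)
    (fun r => v r.1 * v r.2) (fun r => mul_pos (hlam _) (hlam _))
  have e1 : ∑ r : Fin B × Fin B, ((∑ i, W i r.1 * W i r.2) - d * if r.1 = r.2 then lam r.1 else 0)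
      * (v r.1 * v r.2) = (∑ i, (∑ j, W i j * v j) ^ 2) - d * ∑ j, lam j * v j ^ 2 := by
    simp_rw [sub_mul]
    rw [Finset.sum_sub_distrib]
    congr 1
    · simp_rw [Finset.sum_mul]
      rw [Finset.sum_comm]
      refine Finset.sum_congr rfl fun i _ => ?_
      rw [sq, Finset.sum_mul_sum, ← Finset.sum_product', Finset.univ_product_univ]
      refine Finset.sum_congr rfl fun r _ => by ring
    · rw [Fintype.sum_prod_type, Finset.mul_sum]
      refine Finset.sum_congr rfl fun j _ => ?_
      rw [Finset.sum_eq_single j]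
      · simp; ring
      · intro k _ hk
        simp [hk.symm]
      · simp
  have e2 : ∑ r : Fin B × Fin B, lam r.1 * lam r.2 * (v r.1 * v r.2) ^ 2
      = (∑ j, lam j * v j ^ 2) ^ 2 := by
    rw [sq, Finset.sum_mul_sum, ← Finset.sum_product', Finset.univ_product_univ]
    refine Finset.sum_congr rfl fun r _ => by ring
  rw [e1, e2] at hcs
  have hs0 : 0 ≤ ∑ j, lam j * v j ^ 2 :=
    Finset.sum_nonneg fun j _ => mul_nonneg (hlam j).le (sq_nonneg _)
  apply abs_le_of_sq_le_sq _ (by positivity)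
  refine hcs.trans ?_
  calc _ ≤ (ρ * d) ^ 2 * (∑ j, lam j * v j ^ 2) ^ 2 := by
        gcongr
        exact h
    _ = _ := by ring

lemma prob_bad (hlam : ∀ j, 0 < lam j) (d : ℕ) (hd : 0 < d) (ρ : ℝ) (hρ : 0 < ρ) :
    matLaw lam d {W | ¬ CovClose B d lam W ρ}
      ≤ ENNReal.ofReal (gaussC4 * (B ^ 2 / (d * ρ ^ 2))) := by
  have hdR : (0:ℝ) < d := by exact_mod_cast hd
  have hIntg1 : ∀ r : Fin B × Fin B, Integrable (fun W : Fin d → Fin B → ℝ =>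
      ((∑ i, W i r.1 * W i r.2) - d * if r.1 = r.2 then lam r.1 else 0) ^ 2
        / (lam r.1 * lam r.2)) (matLaw lam d) := by
    intro r
    have := ((mat_memLp lam d r.1 r.2).sub
      (memLp_const (d * if r.1 = r.2 then lam r.1 else 0))).integrable_sq
    exact this.div_const _
  have hIntg : Integrable (frobErr lam d) (matLaw lam d) := by
    unfold frobErr
    exact integrable_finsetSum _ fun r _ => hIntg1 r
  have hI : ∫ W, frobErr lam d W ∂(matLaw lam d) ≤ B ^ 2 * (d * gaussC4) := by
    unfold frobErr
    rw [integral_finsetSum _ fun r _ => hIntg1 r]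
    have : ∀ r : Fin B × Fin B, ∫ W : Fin d → Fin B → ℝ,
      ((∑ i, W i r.1 * W i r.2) - d * if r.1 = r.2 then lam r.1 else 0) ^ 2
        / (lam r.1 * lam r.2) ∂(matLaw lam d) ≤ d * gaussC4 := by
      intro r
      have h0 := mul_pos (hlam r.1) (hlam r.2)
      rw [integral_div, div_le_iff₀ h0]
      have := mat_var lam hlam d r.1 r.2
      linarith
    refine (Finset.sum_le_sum fun r _ => this r).trans ?_
    simp only [Finset.sum_const, Finset.card_univ, Fintype.card_prod, Fintype.card_fin,
      nsmul_eq_mul]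
    push_cast
    apply le_of_eq; ring
  have hnn : ∀ W, 0 ≤ frobErr lam d W := fun W => Finset.sum_nonneg fun r _ =>
    div_nonneg (sq_nonneg _) (mul_pos (hlam _) (hlam _)).le
  have hM := mul_meas_ge_le_integral_of_nonneg (ae_of_all _ hnn) hIntg ((ρ * d) ^ 2)
  have hsub : {W | ¬ CovClose B d lam W ρ} ⊆ {W | (ρ * d) ^ 2 ≤ frobErr lam d W} := by
    intro W hW
    by_contra hc
    simp only [Set.mem_ofPred_eq, not_le] at hc
    exact hW (covClose_of_frob lam hlam d W ρ hρ.le hc.le)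
  refine (measure_mono hsub).trans ?_
  rw [← ENNReal.ofReal_toReal (measure_ne_top (matLaw lam d) _)]
  apply ENNReal.ofReal_le_ofReal
  have hpos : 0 < (ρ * d) ^ 2 := by positivity
  have h3 := (hM.trans hI)
  rw [mul_comm, ← le_div_iff₀ hpos] at h3
  refine h3.trans (le_of_eq ?_)
  field_simp

end prob

lemma bad_bound (p T : ℝ) (n B d : ℕ) (hn : 2 ≤ n) (hB : (B : ℝ) ≤ 2 * (n : ℝ) ^ p)
    (hd : |(d : ℝ) - (n : ℝ) ^ T| ≤ 1) (hT : 2 ≤ (n : ℝ) ^ T) :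
    (B : ℝ) ^ 2 / (d * ((n : ℝ) ^ (-(2 * p - 1 / 2))) ^ 2) ≤ 8 * (n : ℝ) ^ (6 * p - 1 - T) := by
  have hn0 : (0:ℝ) < n := by positivity
  have hd2 : (n : ℝ) ^ T / 2 ≤ d := by
    have := (abs_le.1 hd).1
    linarith
  have e1 : ((n : ℝ) ^ (-(2 * p - 1 / 2))) ^ 2 = (n : ℝ) ^ (1 - 4 * p) := by
    rw [← Real.rpow_natCast, ← Real.rpow_mul hn0.le]
    congr 1; push_cast; ring
  have e2 : ((n : ℝ) ^ p) ^ 2 = (n : ℝ) ^ (2 * p) := by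
    rw [← Real.rpow_natCast, ← Real.rpow_mul hn0.le]
    congr 1; push_cast; ring
  have e3 : (n : ℝ) ^ (6 * p - 1 - T) * ((n : ℝ) ^ T * (n : ℝ) ^ (1 - 4 * p))
      = (n : ℝ) ^ (2 * p) := by
    rw [← Real.rpow_add hn0, ← Real.rpow_add hn0]
    congr 1; ring
  have hTp : 0 < (n : ℝ) ^ T := by positivity
  have h4 : 0 < (n : ℝ) ^ (1 - 4 * p) := by positivity
  have h6 : 0 < (n : ℝ) ^ (6 * p - 1 - T) := by positivity
  have hd0 : (0:ℝ) < d := by linarith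
  rw [e1, div_le_iff₀ (by positivity)]
  calc (B : ℝ) ^ 2 ≤ (2 * (n : ℝ) ^ p) ^ 2 := by gcongr
    _ = 4 * (n : ℝ) ^ (2 * p) := by rw [mul_pow, e2]; norm_num
    _ = 8 * (n : ℝ) ^ (6 * p - 1 - T) * ((n : ℝ) ^ T / 2 * (n : ℝ) ^ (1 - 4 * p)) := by
        rw [← e3]; ring
    _ ≤ _ := by gcongr

lemma good_bound (p q : ℝ) (hq : 1 < q) (n m B : ℕ) (hn : 2 ≤ n)
    (hB : B = 2 * (n * m) + 1) (hBu : (B : ℝ) ≤ 2 * (n : ℝ) ^ p)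
    (hBl : (n : ℝ) ^ p - n ≤ B) (hp2 : 2 ≤ (n : ℝ) ^ p) (hγ : (n : ℝ) ^ (-q) ≤ 1 / 2)
    (a : ℝ) (ha : a = (n : ℝ) ^ (-q) * (n * m) / (1 - (n : ℝ) ^ (-q))) :
    2 * Real.sqrt (4 * (n : ℝ) ^ (-(2 * p - 1 / 2)) * n) * (a + m)
      + |1 - 2 * a| / (2 * m + 1 : ℕ)
      ≤ 12 * (n : ℝ) ^ (-(1 / 4) : ℝ) + 2 * (n : ℝ) ^ (1 - p) + 2 * (n : ℝ) ^ (1 - q) := by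
  have hn0 : (0:ℝ) < n := by positivity
  have hn1 : (1:ℝ) ≤ n := by exact_mod_cast (by omega : 1 ≤ n)
  have hBR : (B:ℝ) = 2 * (n * m) + 1 := by rw [hB]; push_cast; ring
  have hγ0 : 0 < (n : ℝ) ^ (-q) := by positivity
  have eγ : (n : ℝ) ^ (-q) * n = (n : ℝ) ^ (1 - q) := by
    rw [← Real.rpow_add_one hn0.ne']; congr 1; ring
  have hq1 : (n : ℝ) ^ (1 - q) ≤ 1 := Real.rpow_le_one_of_one_le_of_nonpos hn1 (by linarith)
  have hq0 : 0 < (n : ℝ) ^ (1 - q) := by positivity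
  have hm0 : (0:ℝ) ≤ m := by positivity
  have ha0 : 0 ≤ a := by
    rw [ha]
    have : 0 < 1 - (n : ℝ) ^ (-q) := by linarith
    positivity
  have ha1 : a ≤ 2 * (n : ℝ) ^ (1 - q) * m := by
    rw [ha, div_le_iff₀ (by linarith), ← eγ]
    have : 0 ≤ (n : ℝ) ^ (-q) * n * m := by positivity
    nlinarith
  have ha2 : a ≤ 2 * m := by nlinarith
  have en : (n : ℝ) ^ (p - 1) * n = (n : ℝ) ^ p := by
    rw [← Real.rpow_add_one hn0.ne']; congr 1; ring
  have hm1 : (m:ℝ) ≤ (n : ℝ) ^ (p - 1) := by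
    have : (m:ℝ) * n ≤ (n : ℝ) ^ (p - 1) * n := by rw [en]; linarith
    exact le_of_mul_le_mul_right this hn0
  have es : Real.sqrt (4 * (n : ℝ) ^ (-(2 * p - 1 / 2)) * n) = 2 * (n : ℝ) ^ (3 / 4 - p) := by
    rw [Real.sqrt_eq_iff_mul_self_eq (by positivity) (by positivity)]
    have : 2 * (n : ℝ) ^ (3 / 4 - p) * (2 * (n : ℝ) ^ (3 / 4 - p))
      = 4 * ((n : ℝ) ^ (3 / 4 - p) * (n : ℝ) ^ (3 / 4 - p)) := by ring
    rw [this, ← Real.rpow_add hn0, mul_assoc, ← Real.rpow_add_one hn0.ne']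
    congr 2; ring
  have h1 : 2 * Real.sqrt (4 * (n : ℝ) ^ (-(2 * p - 1 / 2)) * n) * (a + m)
      ≤ 12 * (n : ℝ) ^ (-(1 / 4) : ℝ) := by
    rw [es]
    have e : (n : ℝ) ^ (-(1 / 4) : ℝ) = (n : ℝ) ^ (3 / 4 - p) * (n : ℝ) ^ (p - 1) := by
      rw [← Real.rpow_add hn0]; congr 1; ring
    rw [e]
    calc 2 * (2 * (n : ℝ) ^ (3 / 4 - p)) * (a + m)
        ≤ 2 * (2 * (n : ℝ) ^ (3 / 4 - p)) * (3 * (n : ℝ) ^ (p - 1)) := by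
          gcongr; linarith
      _ = _ := by ring
  have h2 : 1 ≤ 2 * (n : ℝ) ^ (1 - p) * (2 * m + 1) := by
    have e : (n : ℝ) ^ (1 - p) * (n : ℝ) ^ p = n := by
      rw [← Real.rpow_add hn0, sub_add_cancel, Real.rpow_one]
    have h3 : (n : ℝ) ^ p / 2 ≤ n * (2 * m + 1) := by nlinarith
    have h4 : 0 < (n : ℝ) ^ (1 - p) := by positivity
    have h5 : (n : ℝ) ^ (1 - p) * ((n : ℝ) ^ p / 2) ≤ (n : ℝ) ^ (1 - p) * (n * (2 * m + 1)) := by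
      gcongr
    have h6 : (n : ℝ) * 1 ≤ n * (2 * (n : ℝ) ^ (1 - p) * (2 * m + 1)) := by
      calc (n : ℝ) * 1 = 2 * ((n : ℝ) ^ (1 - p) * ((n : ℝ) ^ p / 2)) := by
            rw [← mul_div_assoc, e]; ring
        _ ≤ 2 * ((n : ℝ) ^ (1 - p) * (n * (2 * m + 1))) := by linarith
        _ = _ := by ring
    exact le_of_mul_le_mul_left h6 hn0
  have h3 : |1 - 2 * a| / (2 * m + 1 : ℕ) ≤ 2 * (n : ℝ) ^ (1 - p) + 2 * (n : ℝ) ^ (1 - q) := by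
    push_cast
    rw [div_le_iff₀ (by positivity)]
    have : |1 - 2 * a| ≤ 1 + 2 * a := by rw [abs_le]; constructor <;> linarith
    nlinarith
  linarith

lemma tendsto_rpow_nat (r : ℝ) (hr : r < 0) :
    Tendsto (fun n : ℕ => (n : ℝ) ^ r) atTop (nhds 0) := by
  have h := (tendsto_rpow_neg_atTop (y := -r) (by linarith)).comp tendsto_natCast_atTop_atTop
  simpa [Function.comp_def] using h

lemma eventually_rpow_ge (r : ℝ) (hr : 0 < r) :
    ∀ᶠ n : ℕ in atTop, 2 ≤ (n : ℝ) ^ r :=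
  ((tendsto_rpow_atTop hr).comp tendsto_natCast_atTop_atTop).eventually_ge_atTop 2

/-- **RFS classification risk converges to the Fourier classification risk.**  Fix
`p, q > 1` and `T > 6p - 1`.  With `d = n^T` RFS features whose Gaussian weight vectors
are i.i.d. `N(0, Σ(n,p,q))`, the classification risk of the minimum-`ℓ₂`-norm RFS
interpolator `ĝ_n` converges in probability to that of the Fourier interpolator `f̂_n`:
for every `δ > 0`, `P(|C(ĝ_n) - C(f̂_n)| > δ) → 0` as `n → ∞`. -/
theorem stmt_9 (p q T : ℝ) (hp : 1 < p) (hq : 1 < q) (hT : 6 * p - 1 < T)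
    (B d : ℕ → ℕ)
    (hB : ∀ n : ℕ, 2 ≤ n → BilevelB n (B n) p)
    (hd : ∀ n : ℕ, 2 ≤ n → |(d n : ℝ) - (n : ℝ) ^ T| ≤ 1)
    (αhat : (n : ℕ) → Fin (B n) → ℝ)
    (hα : ∀ n : ℕ, 2 ≤ n → IsMinInterp n (B n) (bilevelLam n (B n) q) (αhat n))
    (βhat : (n : ℕ) → (Fin (d n) → Fin (B n) → ℝ) → Fin (d n) → ℝ)
    (hβ : ∀ n : ℕ, 2 ≤ n → ∀ W : Fin (d n) → Fin (B n) → ℝ,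
      (∃ β, RFSInterpolates n (B n) (d n) W β) →
        RFSInterpolates n (B n) (d n) W (βhat n W) ∧
        ∀ β : Fin (d n) → ℝ, RFSInterpolates n (B n) (d n) W β →
          ∑ i, (βhat n W i) ^ 2 ≤ ∑ i, (β i) ^ 2) :
    ∀ δ : ℝ, 0 < δ →
      Tendsto (fun n : ℕ =>
          rfsMeasure n (B n) (d n) q
            {W | δ < |classRisk (rfsFun (B n) (d n) W (βhat n W)) -
                classRisk (fun x => ∑ j, αhat n j * phiF (B n) x j)|})
        atTop (nhds 0) := by
  intro δ hδ
  have hbnd : Tendsto (fun n : ℕ => 2 * Real.sqrt (12 * (n : ℝ) ^ (-(1 / 4) : ℝ)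
      + 2 * (n : ℝ) ^ (1 - p) + 2 * (n : ℝ) ^ (1 - q))) atTop (nhds 0) := by
    have h1 := (tendsto_rpow_nat (-(1 / 4)) (by norm_num)).const_mul 12
    have h2 := (tendsto_rpow_nat (1 - p) (by linarith)).const_mul 2
    have h3 := (tendsto_rpow_nat (1 - q) (by linarith)).const_mul 2
    have h4 := (((h1.add h2).add h3).sqrt).const_mul 2
    simpa using h4
  have hprob : Tendsto (fun n : ℕ =>
      ENNReal.ofReal (gaussC4 * (8 * (n : ℝ) ^ (6 * p - 1 - T)))) atTop (nhds 0) := by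
    have h1 := ((tendsto_rpow_nat (6 * p - 1 - T) (by linarith)).const_mul 8).const_mul gaussC4
    have h2 := ENNReal.tendsto_ofReal h1
    simpa using h2
  refine tendsto_of_tendsto_of_tendsto_of_le_of_le' tendsto_const_nhds hprob
    (Eventually.of_forall fun n => zero_le) ?_
  filter_upwards [eventually_ge_atTop 2, eventually_rpow_ge p (by linarith),
    eventually_rpow_ge T (by linarith), hbnd.eventually (gt_mem_nhds hδ),
    (tendsto_rpow_nat (-q) (by linarith)).eventually (gt_mem_nhds (by norm_num : (0:ℝ) < 1 / 2)),
    (tendsto_rpow_nat (1 - p) (by linarith)).eventually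
      (gt_mem_nhds (by norm_num : (0:ℝ) < 1 / 4)),
    (tendsto_rpow_nat (-(2 * p - 1 / 2)) (by linarith)).eventually
      (gt_mem_nhds (by norm_num : (0:ℝ) < 1 / 2))] with n hn hnp hnT hnδ hnq hnp1 hnρ
  obtain ⟨hodd, hdvd, habs⟩ := hB n hn
  have hn0 : (0:ℝ) < n := by positivity
  have hn1 : (1:ℝ) ≤ n := by exact_mod_cast (by omega : 1 ≤ n)
  obtain ⟨m, hm⟩ := hdvd
  have hBpos : 1 ≤ B n := hodd.pos
  have hBm : B n = 2 * (n * m) + 1 := by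
    have : B n - 1 = 2 * (n * m) := by rw [hm]; ring
    omega
  have hnnp : (n:ℝ) ≤ (n:ℝ) ^ p := by
    calc (n:ℝ) = (n:ℝ) ^ (1:ℝ) := (Real.rpow_one _).symm
      _ ≤ _ := Real.rpow_le_rpow_of_exponent_le hn1 hp.le
  have hab := abs_le.1 habs
  have hBu : (B n : ℝ) ≤ 2 * (n : ℝ) ^ p := by linarith
  have hBl : (n : ℝ) ^ p - n ≤ B n := by linarith
  have hm1 : 0 < m := by
    rcases Nat.eq_zero_or_pos m with h | h
    · exfalso
      rw [h] at hBm
      have hB1 : (B n : ℝ) = 1 := by rw [hBm]; simp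
      have e : (n : ℝ) ^ (1 - p) * (n : ℝ) ^ p = n := by
        rw [← Real.rpow_add hn0, sub_add_cancel, Real.rpow_one]
      have : (n:ℝ) ^ p ≤ 1 + n := by linarith
      have h4 : 0 < (n : ℝ) ^ (1 - p) := by positivity
      nlinarith
    · exact h
  have hdn := hd n hn
  have hdpos : 0 < d n := by
    have := (abs_le.1 hdn).1
    have : (0:ℝ) < d n := by linarith
    exact_mod_cast this
  have hmR : (0:ℝ) < m := by exact_mod_cast hm1
  have hBR : (B n:ℝ) = 2 * (n * m) + 1 := by rw [hBm]; push_cast; ring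
  have hγ0 : 0 < (n : ℝ) ^ (-q) := by positivity
  have hBR0 : (0:ℝ) < B n := by exact_mod_cast hBpos
  have hB1 : (0:ℝ) < (B n : ℝ) - 1 := by rw [hBR]; simp; positivity
  have hL0 : 0 < (n : ℝ) ^ (-q) * (B n : ℝ) := by positivity
  have h1γ : 0 < 1 - (n : ℝ) ^ (-q) := by linarith
  have hLL : 0 < (1 - (n : ℝ) ^ (-q)) * (B n : ℝ) / ((B n : ℝ) - 1) := by positivity
  have hlam : ∀ j : Fin (B n), bilevelLam n (B n) q j = if j.val = 0 then (n : ℝ) ^ (-q) * (B n : ℝ)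
      else (1 - (n : ℝ) ^ (-q)) * (B n : ℝ) / ((B n : ℝ) - 1) := fun j => rfl
  have hpos : ∀ j : Fin (B n), 0 < bilevelLam n (B n) q j := by
    intro j; rw [hlam]; split_ifs <;> assumption
  have hρ0 : 0 < (n : ℝ) ^ (-(2 * p - 1 / 2)) := by positivity
  have hbad := prob_bad (bilevelLam n (B n) q) hpos (d n) hdpos _ hρ0
  have hbb := bad_bound p T n (B n) (d n) hn hBu hdn hnT
  have hfinal := hbad.trans (ENNReal.ofReal_le_ofReal
    (mul_le_mul_of_nonneg_left hbb gaussC4_nonneg))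
  refine le_trans (measure_mono ?_) hfinal
  intro W hW
  by_contra hc
  have H : CovClose (B n) (d n) (bilevelLam n (B n) q) W ((n : ℝ) ^ (-(2 * p - 1 / 2))) := by
    by_contra h
    exact hc h
  have hr := risk_close n m (B n) (d n) (by omega) hdpos _ _ hL0 hLL hBm _ hlam (αhat n) (hα n hn)
    W _ hρ0.le hnρ.le H (βhat n W) (hβ n hn W) _ rfl
  have hg := good_bound p q hq n m (B n) hn hBm hBu hBl hnp hnq.le
    ((n : ℝ) ^ (-q) * (B n : ℝ) / (2 * ((1 - (n : ℝ) ^ (-q)) * (B n : ℝ) / ((B n : ℝ) - 1)))) (by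
      have : (B n : ℝ) - 1 = 2 * (n * m) := by rw [hBR]; ring
      rw [this]
      field_simp)
  have hs := Real.sqrt_le_sqrt hg
  have hW' : δ < _ := hW
  linarith
end
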